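/- Let n ≥ 1, α > 0 and 1 < q ≤ 1 + α/n. Suppose the coefficients a_{ij} satisfy condition (8) with this α and some c > 0. Let (u,v) be a pair of functions, continuous on [0,∞) × ℝⁿ and C¹ on S with |u|^q, |v|^q locally integrable on S, whose restriction to S is an entire weak solution of u_t − Lu − |u|^{q−1}u ≥ v_t − Lv − |v|^{q−1}v, with arbitrary initial data u(0,·) and v(0,·). If u ≥ v on S, then u = v in S. -/

import Mathlib

open MeasureTheory Real

noncomputable section

/-- Euclidean space ℝⁿ. -/
abbrev Xn (n : ℕ) : Type := EuclideanSpace ℝ (Fin n)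

/-- Points of the half-space `S = (0,∞) × ℝⁿ`. -/
abbrev Pt (n : ℕ) : Type := ℝ × Xn n

/-- The half-space `S = (0,∞) × ℝⁿ`. -/
def halfSpace (n : ℕ) : Set (Pt n) := {p | 0 < p.1}

/-- Partial derivative in the time variable. -/
noncomputable def pdT {n : ℕ} (w : Pt n → ℝ) (p : Pt n) : ℝ :=
  fderiv ℝ w p (1, 0)

/-- Partial derivative in the space variable `x_j`. -/
noncomputable def pdX {n : ℕ} (w : Pt n → ℝ) (j : Fin n) (p : Pt n) : ℝ :=
  fderiv ℝ w p (0, EuclideanSpace.single j 1)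

/-- The odd power function `x ↦ |x|^{q-1} x`. -/
noncomputable def oddPow (q x : ℝ) : ℝ := |x| ^ (q - 1) * x

/-- Condition (8): `𝒜(R) ≤ c R^{2-α}` for all `R > 1`, expressed as an a.e. bound
on the majorant `A` over the region `{(t,x) : t > 0, R/2 < |x| < R}`. -/
def Cond8 {n : ℕ} (A : Pt n → ℝ) (α c : ℝ) : Prop :=
  ∀ R : ℝ, 1 < R →
    ∀ᵐ p ∂(volume.restrict
        {p : Pt n | 0 < p.1 ∧ R / 2 < ‖p.2‖ ∧ ‖p.2‖ < R}),
      A p ≤ c * R ^ (2 - α)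

/-- `u` is an entire weak solution of `u_t ≥ Lu + |u|^{q−1}u` in `S`. -/
def WeakSuperSol {n : ℕ} (a : Fin n → Fin n → Pt n → ℝ) (q : ℝ)
    (u : Pt n → ℝ) : Prop :=
  ∀ φ : Pt n → ℝ, ContDiff ℝ (⊤ : ℕ∞) φ → HasCompactSupport φ →
    tsupport φ ⊆ halfSpace n → (∀ p, 0 ≤ φ p) →
    0 ≤ ∫ p in halfSpace n,
        (pdT u p * φ p + ∑ i, ∑ j, a i j p * pdX φ i p * pdX u j p
          - oddPow q (u p) * φ p)

/-- `v` is an entire weak solution of `v_t ≤ Lv + |v|^{q−1}v` in `S`. -/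
def WeakSubSol {n : ℕ} (a : Fin n → Fin n → Pt n → ℝ) (q : ℝ)
    (v : Pt n → ℝ) : Prop :=
  ∀ φ : Pt n → ℝ, ContDiff ℝ (⊤ : ℕ∞) φ → HasCompactSupport φ →
    tsupport φ ⊆ halfSpace n → (∀ p, 0 ≤ φ p) →
    ∫ p in halfSpace n,
        (pdT v p * φ p + ∑ i, ∑ j, a i j p * pdX φ i p * pdX v j p
          - oddPow q (v p) * φ p) ≤ 0

/-- `(u,v)` is an entire weak solution of
`u_t − Lu − |u|^{q−1}u ≥ v_t − Lv − |v|^{q−1}v` in `S`. -/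
def WeakSolPair {n : ℕ} (a : Fin n → Fin n → Pt n → ℝ) (q : ℝ)
    (u v : Pt n → ℝ) : Prop :=
  ∀ φ : Pt n → ℝ, ContDiff ℝ (⊤ : ℕ∞) φ → HasCompactSupport φ →
    tsupport φ ⊆ halfSpace n → (∀ p, 0 ≤ φ p) →
    ∫ p in halfSpace n,
        (pdT u p * φ p + ∑ i, ∑ j, a i j p * pdX φ i p * pdX u j p
          - oddPow q (u p) * φ p) ≥
    ∫ p in halfSpace n,
        (pdT v p * φ p + ∑ i, ∑ j, a i j p * pdX φ i p * pdX v j p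
          - oddPow q (v p) * φ p)

lemma oddPow_of_nonneg {q x : ℝ} (hq : 1 < q) (hx : 0 ≤ x) : oddPow q x = x ^ q := by
  unfold oddPow
  rw [abs_of_nonneg hx]
  rcases hx.eq_or_lt with rfl | hx
  · simp [Real.zero_rpow (by linarith : q ≠ 0)]
  · rw [← Real.rpow_add_one hx.ne']; congr 1; ring

lemma oddPow_of_nonpos {q x : ℝ} (hq : 1 < q) (hx : x ≤ 0) : oddPow q x = -((-x) ^ q) := by
  rw [← oddPow_of_nonneg hq (by linarith : 0 ≤ -x)]
  unfold oddPow
  rw [abs_neg]; ring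

lemma rpow_superadd {q a b : ℝ} (hq : 1 < q) (ha : 0 ≤ a) (hb : 0 ≤ b) :
    a ^ q + b ^ q ≤ (a + b) ^ q := Real.add_rpow_le_rpow_add ha hb hq.le

lemma oddPow_sub_ge {q x y : ℝ} (hq : 1 < q) (hxy : y ≤ x) :
    (2:ℝ) ^ (-q) * (x - y) ^ q ≤ oddPow q x - oddPow q y := by
  have hk : (2:ℝ) ^ (-q) ≤ 1 := Real.rpow_le_one_of_one_le_of_nonpos (by norm_num) (by linarith)
  have hd : 0 ≤ (x - y) ^ q := Real.rpow_nonneg (by linarith) _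
  have hle : (2:ℝ) ^ (-q) * (x - y) ^ q ≤ (x - y) ^ q := by nlinarith
  rcases le_total 0 y with hy | hy
  · have hx : 0 ≤ x := hy.trans hxy
    rw [oddPow_of_nonneg hq hx, oddPow_of_nonneg hq hy]
    have := rpow_superadd hq (by linarith : 0 ≤ x - y) hy
    rw [sub_add_cancel] at this
    linarith
  · rcases le_total 0 x with hx | hx
    · rw [oddPow_of_nonneg hq hx, oddPow_of_nonpos hq hy]
      have h1 : (2:ℝ) ^ (-q) * (x - y) ^ q = ((x - y) / 2) ^ q := by
        rw [Real.div_rpow (by linarith) (by norm_num), Real.rpow_neg (by norm_num)]; ring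
      rw [h1]
      have hx0 := Real.rpow_nonneg hx q
      have hy0 := Real.rpow_nonneg (by linarith : 0 ≤ -y) q
      rcases le_total x (-y) with h | h
      · have := Real.rpow_le_rpow (by linarith) (by linarith : (x - y) / 2 ≤ -y) (by linarith : 0 ≤ q)
        linarith
      · have := Real.rpow_le_rpow (by linarith) (by linarith : (x - y) / 2 ≤ x) (by linarith : 0 ≤ q)
        linarith
    · rw [oddPow_of_nonpos hq hx, oddPow_of_nonpos hq hy]
      have := rpow_superadd hq (by linarith : 0 ≤ x - y) (by linarith : 0 ≤ -x)
      rw [show x - y + -x = -y by ring] at this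
      linarith

lemma continuous_oddPow {q : ℝ} (hq : 1 < q) : Continuous (oddPow q) := by
  unfold oddPow
  exact (continuous_abs.rpow_const (fun x => Or.inr (by linarith))).mul continuous_id

lemma st_deriv_bound : ∃ C : ℝ, 0 < C ∧ (∀ x, |deriv smoothTransition x| ≤ C) ∧
    (∀ x, 0 ≤ deriv smoothTransition x) ∧ (∀ x, x ≤ 0 → deriv smoothTransition x = 0) ∧
    (∀ x, 1 ≤ x → deriv smoothTransition x = 0) := by
  have h0 : ∀ x, x ≤ 0 → deriv smoothTransition x = 0 := by
    intro x hx
    apply IsLocalMin.deriv_eq_zero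
    filter_upwards with y
    rw [smoothTransition.zero_of_nonpos hx]
    exact smoothTransition.nonneg y
  have h1 : ∀ x, 1 ≤ x → deriv smoothTransition x = 0 := by
    intro x hx
    apply IsLocalMax.deriv_eq_zero
    filter_upwards with y
    rw [smoothTransition.one_of_one_le hx]
    exact smoothTransition.le_one y
  have hc : Continuous (deriv smoothTransition) :=
    (smoothTransition.contDiff (n := 1)).continuous_deriv (by norm_num)
  obtain ⟨C, hC⟩ := (isCompact_Icc (a := (0:ℝ)) (b := 1)).exists_bound_of_continuousOn hc.continuousOn
  refine ⟨max C 1, by positivity, fun x => ?_, fun x => smoothTransition.monotone.deriv_nonneg, h0, h1⟩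
  rcases le_total x 0 with h | h
  · rw [h0 x h]; simp
  rcases le_total 1 x with h' | h'
  · rw [h1 x h']; simp
  exact (hC x ⟨h, h'⟩).trans (le_max_left _ _)

lemma isOpen_halfSpace (n : ℕ) : IsOpen (halfSpace n) := isOpen_lt continuous_const continuous_fst

lemma measurableSet_halfSpace (n : ℕ) : MeasurableSet (halfSpace n) := (isOpen_halfSpace n).measurableSet

/-- bounded on compact subsets of `S` -/
def LB {n : ℕ} (f : Pt n → ℝ) : Prop :=
  ∀ K : Set (Pt n), IsCompact K → K ⊆ halfSpace n → ∃ M, ∀ p ∈ K, |f p| ≤ M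

lemma LB.of_continuousOn {n : ℕ} {f : Pt n → ℝ} (h : ContinuousOn f (halfSpace n)) : LB f := by
  intro K hK hKS
  exact hK.exists_bound_of_continuousOn (h.mono hKS)

lemma LB.mul {n : ℕ} {f g : Pt n → ℝ} (hf : LB f) (hg : LB g) : LB (fun p => f p * g p) := by
  intro K hK hKS
  obtain ⟨M, hM⟩ := hf K hK hKS
  obtain ⟨N, hN⟩ := hg K hK hKS
  refine ⟨M * N, fun p hp => ?_⟩
  rw [abs_mul]
  exact mul_le_mul (hM p hp) (hN p hp) (abs_nonneg _) ((abs_nonneg _).trans (hM p hp))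

lemma LB.add {n : ℕ} {f g : Pt n → ℝ} (hf : LB f) (hg : LB g) : LB (fun p => f p + g p) := by
  intro K hK hKS
  obtain ⟨M, hM⟩ := hf K hK hKS
  obtain ⟨N, hN⟩ := hg K hK hKS
  exact ⟨M + N, fun p hp => (abs_add_le _ _).trans (add_le_add (hM p hp) (hN p hp))⟩

lemma LB.sum {n : ℕ} {ι : Type*} (s : Finset ι) {f : ι → Pt n → ℝ} (hf : ∀ i, LB (f i)) :
    LB (fun p => ∑ i ∈ s, f i p) := by
  classical
  induction s using Finset.induction_on with
  | empty => intro K _ _; exact ⟨0, by simp⟩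
  | insert a s ha ih =>
    simp only [Finset.sum_insert ha]
    exact (hf a).add ih

lemma integrable_of_LB {n : ℕ} {f : Pt n → ℝ} (hf : LB f)
    (hm : AEStronglyMeasurable f (volume.restrict (halfSpace n)))
    {K : Set (Pt n)} (hK : IsCompact K) (hKS : K ⊆ halfSpace n) (h0 : ∀ p, p ∉ K → f p = 0) :
    IntegrableOn f (halfSpace n) := by
  obtain ⟨M, hM⟩ := hf K hK hKS
  have h1 : IntegrableOn f K := by
    have : IsFiniteMeasure (volume.restrict K) := ⟨by simpa using hK.measure_lt_top⟩
    refine Integrable.of_bound (C := M) ?_ ?_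
    · exact hm.mono_measure (Measure.restrict_mono hKS le_rfl)
    · filter_upwards [ae_restrict_mem hK.measurableSet] with p hp
      exact hM p hp
  have h2 : Integrable f := (integrableOn_iff_integrable_of_support_subset (by
    intro p hp
    by_contra h
    exact hp (h0 p h))).1 h1
  exact h2.integrableOn

lemma haar_Pt (n : ℕ) : (volume : Measure (Pt n)).IsAddHaarMeasure := by
  have : (volume : Measure (Pt n)) = (volume : Measure ℝ).prod (volume : Measure (Xn n)) := rfl
  rw [this]
  infer_instance

open Filter Topology Convolution in
/-- The weak inequality extends from smooth to `C¹` test functions. -/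
lemma weak_C1 {n : ℕ} {b : Pt n → ℝ} {B : Fin n → Pt n → ℝ} (hb : LB b) (hB : ∀ i, LB (B i))
    (hbm : AEStronglyMeasurable b (volume.restrict (halfSpace n)))
    (hBm : ∀ i, AEStronglyMeasurable (B i) (volume.restrict (halfSpace n)))
    (H : ∀ φ : Pt n → ℝ, ContDiff ℝ (⊤ : ℕ∞) φ → HasCompactSupport φ →
      tsupport φ ⊆ halfSpace n → (∀ p, 0 ≤ φ p) →
      0 ≤ ∫ p in halfSpace n, (b p * φ p + ∑ i, B i p * pdX φ i p))
    (φ : Pt n → ℝ) (h1 : ContDiff ℝ 1 φ) (h2 : HasCompactSupport φ)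
    (h3 : tsupport φ ⊆ halfSpace n) (h4 : ∀ p, 0 ≤ φ p) :
    0 ≤ ∫ p in halfSpace n, (b p * φ p + ∑ i, B i p * pdX φ i p) := by
  have := haar_Pt n
  obtain ⟨δ, hδ, hδS⟩ := IsCompact.exists_cthickening_subset_open (s := tsupport φ) h2
    (isOpen_halfSpace n) h3
  set K := Metric.cthickening δ (tsupport φ) with hKdef
  have hK : IsCompact K := IsCompact.cthickening h2
  let ρ : ℕ → ContDiffBump (0 : Pt n) := fun k =>
    ⟨δ / 2 / (k + 1), δ / (k + 1), by positivity, by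
      have : (0:ℝ) < k + 1 := by positivity
      gcongr; linarith⟩
  let ψ : ℕ → Pt n → ℝ := fun k =>
    ((ρ k).normed volume) ⋆[ContinuousLinearMap.lsmul ℝ ℝ, volume] φ
  have hrho : Tendsto (fun k => (ρ k).rOut) atTop (𝓝 0) := by
    have := (tendsto_one_div_add_atTop_nhds_zero_nat (𝕜 := ℝ)).const_mul δ
    simpa [ρ, div_eq_mul_inv] using this
  have hroutle : ∀ k, (ρ k).rOut ≤ δ := by
    intro k
    change δ / ((k:ℝ) + 1) ≤ δ
    apply div_le_self hδ.le
    have : (0:ℝ) ≤ k := by positivity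
    linarith
  have hcont := h1.continuous
  have hcontd : Continuous (fderiv ℝ φ) := h1.continuous_fderiv (by norm_num)
  have hli : ∀ k, LocallyIntegrable ((ρ k).normed volume) (volume : Measure (Pt n)) := fun k =>
    (ρ k).continuous_normed.locallyIntegrable
  have hψd : ∀ k p, fderiv ℝ (ψ k) p =
      (((ρ k).normed volume) ⋆[ContinuousLinearMap.lsmul ℝ ℝ, volume] (fderiv ℝ φ)) p := by
    intro k p
    have := (HasCompactSupport.hasFDerivAt_convolution_right (ContinuousLinearMap.lsmul ℝ ℝ)
      h2 (hli k) h1 p).fderiv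
    rw [this]
    rfl
  have hψsmooth : ∀ k, ContDiff ℝ (⊤ : ℕ∞) (ψ k) := fun k =>
    HasCompactSupport.contDiff_convolution_left _ (ρ k).hasCompactSupport_normed
      (ρ k).contDiff_normed hcont.locallyIntegrable
  have hψts : ∀ k, tsupport (ψ k) ⊆ K := by
    intro k
    apply closure_minimal _ Metric.isClosed_cthickening
    refine (support_convolution_subset _).trans ?_
    rw [(ρ k).support_normed_eq]
    rintro _ ⟨x, hx, y, hy, rfl⟩
    refine Metric.thickening_subset_cthickening _ _ (Metric.mem_thickening_iff.2
      ⟨y, subset_tsupport _ hy, ?_⟩)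
    have : ‖x‖ < (ρ k).rOut := by simpa using hx
    simpa [dist_eq_norm] using this.trans_le (hroutle k)
  have hψcs : ∀ k, HasCompactSupport (ψ k) := fun k => hK.of_isClosed_subset (isClosed_tsupport _) (hψts k)
  have hψnn : ∀ k p, 0 ≤ ψ k p := by
    intro k p
    apply integral_nonneg
    intro x
    exact mul_nonneg ((ρ k).nonneg_normed x) (h4 _)
  obtain ⟨M, hM⟩ := h2.exists_bound_of_continuous hcont
  obtain ⟨N, hN⟩ := (h2.fderiv ℝ).exists_bound_of_continuous hcontd
  have hψM : ∀ k p, |ψ k p| ≤ 3 * M := by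
    intro k p
    have := (ρ k).dist_normed_convolution_le (μ := volume) (x₀ := p) (ε := 2 * M) (g := φ)
      hcont.aestronglyMeasurable (fun x _ => by
        rw [dist_eq_norm]
        exact (norm_sub_le _ _).trans (by linarith [hM x, hM p]))
    rw [dist_eq_norm] at this
    have h5 := norm_sub_norm_le (ψ k p) (φ p)
    have h6 := hM p
    change ‖ψ k p‖ ≤ 3 * M
    change ‖ψ k p - φ p‖ ≤ _ at this
    linarith
  have hψN : ∀ k p, ‖fderiv ℝ (ψ k) p‖ ≤ 3 * N := by
    intro k p
    have := (ρ k).dist_normed_convolution_le (μ := volume) (x₀ := p) (ε := 2 * N) (g := fderiv ℝ φ)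
      hcontd.aestronglyMeasurable (fun x _ => by
        rw [dist_eq_norm]
        exact (norm_sub_le _ _).trans (by linarith [hN x, hN p]))
    rw [dist_eq_norm, ← hψd] at this
    have h5 := norm_sub_norm_le (fderiv ℝ (ψ k) p) (fderiv ℝ φ p)
    have h6 := hN p
    linarith
  obtain ⟨Mb, hMb⟩ := hb K hK hδS
  choose MB hMB using fun i => hB i K hK hδS
  have hlim : Tendsto (fun k => ∫ p in halfSpace n, (b p * ψ k p + ∑ i, B i p * pdX (ψ k) i p)) atTop
      (𝓝 (∫ p in halfSpace n, (b p * φ p + ∑ i, B i p * pdX φ i p))) := by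
    apply tendsto_integral_of_dominated_convergence
      (K.indicator (fun _ => Mb * (3 * M) + ∑ i : Fin n, MB i * (3 * N *
        ‖((0, EuclideanSpace.single i 1) : Pt n)‖)))
    · intro k
      have hc : Continuous (fderiv ℝ (ψ k)) := (hψsmooth k).continuous_fderiv (by simp)
      refine (hbm.mul (hψsmooth k).continuous.aestronglyMeasurable).add ?_
      refine Finset.aestronglyMeasurable_fun_sum _ (fun i _ => (hBm i).mul ?_)
      exact (hc.clm_apply continuous_const).aestronglyMeasurable
    · apply Integrable.integrableOn
      rw [integrable_indicator_iff hK.measurableSet]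
      exact integrableOn_const hK.measure_lt_top.ne
    · intro k
      filter_upwards with p
      by_cases hp : p ∈ K
      · rw [Set.indicator_of_mem hp]
        refine (norm_add_le _ _).trans (add_le_add ?_ ?_)
        · rw [norm_mul]
          exact mul_le_mul (hMb p hp) (hψM k p) (norm_nonneg _) ((abs_nonneg _).trans (hMb p hp))
        · refine (norm_sum_le _ _).trans (Finset.sum_le_sum fun i _ => ?_)
          rw [norm_mul]
          refine mul_le_mul (hMB i p hp) ?_ (norm_nonneg _) ((abs_nonneg _).trans (hMB i p hp))
          exact ((fderiv ℝ (ψ k) p).le_opNorm _).trans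
            (mul_le_mul_of_nonneg_right (hψN k p) (norm_nonneg _))
      · rw [Set.indicator_of_notMem hp]
        have e1 : ψ k p = 0 := image_eq_zero_of_notMem_tsupport (fun h => hp (hψts k h))
        have e2 : fderiv ℝ (ψ k) p = 0 := by
          by_contra hne
          exact hp (hψts k (support_fderiv_subset ℝ hne))
        simp [e1, pdX, e2]
    · filter_upwards with p
      have c1 : Tendsto (fun k => ψ k p) atTop (𝓝 (φ p)) :=
        ContDiffBump.convolution_tendsto_right_of_continuous hrho hcont p
      have c2 : Tendsto (fun k => fderiv ℝ (ψ k) p) atTop (𝓝 (fderiv ℝ φ p)) := by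
        simp_rw [hψd]
        exact ContDiffBump.convolution_tendsto_right_of_continuous hrho hcontd p
      refine (c1.const_mul _).add (tendsto_finsetSum _ fun i _ => Tendsto.const_mul _ ?_)
      exact ((ContinuousLinearMap.apply ℝ ℝ ((0, EuclideanSpace.single i 1) : Pt n)).continuous.tendsto
        _).comp c2
  exact ge_of_tendsto' hlim (fun k => H _ (hψsmooth k) (hψcs k) ((hψts k).trans hδS) (hψnn k))

lemma integral_pdT_eq_zero {n : ℕ} {F : Pt n → ℝ} (h1 : ContDiff ℝ 1 F) (h2 : HasCompactSupport F)
    (h3 : tsupport F ⊆ halfSpace n) : ∫ p in halfSpace n, pdT F p = 0 := by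
  have := haar_Pt n
  have hcd : Continuous (fun p => fderiv ℝ F p ((1, 0) : Pt n)) :=
    (h1.continuous_fderiv (by norm_num)).clm_apply continuous_const
  have e : ∫ p in halfSpace n, pdT F p = ∫ p, pdT F p := by
    apply setIntegral_eq_integral_of_forall_compl_eq_zero
    intro p hp
    have : fderiv ℝ F p = 0 := by
      by_contra hne
      exact hp (h3 (support_fderiv_subset ℝ hne))
    simp [pdT, this]
  rw [e]
  have hci : Integrable (fun p => fderiv ℝ F p ((1, 0) : Pt n)) := by
    apply hcd.integrable_of_hasCompactSupport
    exact h2.fderiv_apply ℝ _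
  have := integral_mul_fderiv_eq_neg_fderiv_mul_of_integrable (μ := (volume : Measure (Pt n)))
    (f := fun _ => (1:ℝ)) (g := F) (v := ((1,0) : Pt n)) (𝕜 := ℝ) (by simp) (by simpa using hci)
    (by simpa using h1.continuous.integrable_of_hasCompactSupport h2) (by simp)
    (fun x _ => h1.differentiable (by norm_num) x)
  simpa [pdT] using this

/-- A space-time cut-off at scale `R` (time scale `T`). -/
structure Cutoff (n : ℕ) (C T R : ℝ) (D η : Pt n → ℝ) : Prop where
  cD : ContDiff ℝ 1 D
  cη : ContDiff ℝ 1 η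
  D0 : ∀ p, 0 ≤ D p
  D1 : ∀ p, D p ≤ 1
  η0 : ∀ p, 0 ≤ η p
  η1 : ∀ p, η p ≤ 1
  XD : ∀ p i, pdX D i p = 0
  Tη : ∀ p, pdT η p = 0
  TD : ∀ p, |pdT D p| ≤ C * T⁻¹
  TD0 : ∀ p, p.1 ≤ T → pdT D p = 0
  Deq1 : ∀ p, p.1 ≤ T → D p = 1
  Deq0 : ∀ p, 2 * T ≤ p.1 → D p = 0
  ηeq1 : ∀ p, ‖p.2‖ ≤ R / 2 → η p = 1
  ηeq0 : ∀ p, R ≤ ‖p.2‖ → η p = 0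
  Xη : ∀ p, ∑ i, pdX η i p ^ 2 ≤ C * (R ^ 2)⁻¹
  Xη0 : ∀ p, ¬ (R / 2 < ‖p.2‖ ∧ ‖p.2‖ < R) → ∀ i, pdX η i p = 0

lemma st_hasDerivAt (x : ℝ) : HasDerivAt smoothTransition (deriv smoothTransition x) x :=
  ((smoothTransition.contDiff (n := 1)).differentiable (by norm_num) x).hasDerivAt

lemma fderiv_time {n : ℕ} {f : ℝ → ℝ} {f' : ℝ} {p : Pt n} (h : HasDerivAt f f' p.1) (v : Pt n) :
    fderiv ℝ (fun p : Pt n => f p.1) p v = f' * v.1 := by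
  have h1 : HasFDerivAt (fun p : Pt n => p.1) (ContinuousLinearMap.fst ℝ ℝ (Xn n)) p := hasFDerivAt_fst
  have := (h.comp_hasFDerivAt p h1).fderiv
  change fderiv ℝ (f ∘ fun p : Pt n => p.1) p v = _
  rw [this]
  simp

lemma fderiv_space {n : ℕ} {f : ℝ → ℝ} {f' : ℝ} {p : Pt n} (h : HasDerivAt f f' (‖p.2‖ ^ 2)) (v : Pt n) :
    fderiv ℝ (fun p : Pt n => f (‖p.2‖ ^ 2)) p v = f' * (2 * inner ℝ p.2 v.2) := by
  have h1 : HasFDerivAt (fun p : Pt n => p.2) (ContinuousLinearMap.snd ℝ ℝ (Xn n)) p := hasFDerivAt_snd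
  have := (h.comp_hasFDerivAt p h1.norm_sq).fderiv
  change fderiv ℝ (f ∘ fun p : Pt n => ‖p.2‖ ^ 2) p v = _
  rw [this]
  simp

lemma exists_cutoff (n : ℕ) : ∃ C : ℝ, 0 < C ∧ ∀ T R : ℝ, 0 < T → 0 < R →
    ∃ D η : Pt n → ℝ, Cutoff n C T R D η := by
  obtain ⟨C, hC, hb, hnn, hz, ho⟩ := st_deriv_bound
  refine ⟨C + C ^ 2 * 8, by positivity, fun T R hT hR => ?_⟩
  have hD : ∀ t : ℝ, HasDerivAt (fun t => smoothTransition (2 - t / T))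
      (deriv smoothTransition (2 - t / T) * (-(1 / T))) t := by
    intro t
    exact (st_hasDerivAt _).comp t (((hasDerivAt_id t).div_const T).const_sub 2)
  have hE : ∀ r : ℝ, HasDerivAt (fun r => smoothTransition (4 / 3 * (1 - r / R ^ 2)))
      (deriv smoothTransition (4 / 3 * (1 - r / R ^ 2)) * (4 / 3 * (-(1 / R ^ 2)))) r := by
    intro r
    exact (st_hasDerivAt _).comp r ((((hasDerivAt_id r).div_const (R ^ 2)).const_sub 1).const_mul _)
  refine ⟨fun p => smoothTransition (2 - p.1 / T),
    fun p => smoothTransition (4 / 3 * (1 - ‖p.2‖ ^ 2 / R ^ 2)), ?_⟩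
  have hX : ∀ (p : Pt n) (i : Fin n), pdX (fun p : Pt n => smoothTransition (4 / 3 * (1 - ‖p.2‖ ^ 2 / R ^ 2))) i p
      = deriv smoothTransition (4 / 3 * (1 - ‖p.2‖ ^ 2 / R ^ 2)) * (4 / 3 * (-(1 / R ^ 2))) * (2 * p.2 i) := by
    intro p i
    unfold pdX
    rw [fderiv_space (hE _)]
    simp [EuclideanSpace.inner_single_right]
  have hT' : ∀ p : Pt n, pdT (fun p : Pt n => smoothTransition (2 - p.1 / T)) p =
      deriv smoothTransition (2 - p.1 / T) * (-(1 / T)) := by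
    intro p
    unfold pdT
    rw [fderiv_time (hD _)]; simp
  have hout : ∀ p : Pt n, ¬ (R / 2 < ‖p.2‖ ∧ ‖p.2‖ < R) →
      deriv smoothTransition (4 / 3 * (1 - ‖p.2‖ ^ 2 / R ^ 2)) = 0 := by
    intro p hp
    rcases le_or_gt ‖p.2‖ (R / 2) with h | h
    · apply ho
      have : ‖p.2‖ ^ 2 / R ^ 2 ≤ 1 / 4 := by
        rw [div_le_iff₀ (by positivity)]
        nlinarith [norm_nonneg p.2]
      linarith
    · have h2 : R ≤ ‖p.2‖ := by
        by_contra h3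
        exact hp ⟨h, not_le.1 h3⟩
      apply hz
      have : 1 ≤ ‖p.2‖ ^ 2 / R ^ 2 := by
        rw [le_div_iff₀ (by positivity)]
        nlinarith [norm_nonneg p.2]
      linarith
  refine ⟨?_, ?_, fun p => smoothTransition.nonneg _, fun p => smoothTransition.le_one _,
    fun p => smoothTransition.nonneg _, fun p => smoothTransition.le_one _, ?_, ?_, ?_, ?_, ?_, ?_, ?_, ?_, ?_, ?_⟩
  · exact (smoothTransition.contDiff (n := 1)).comp (by fun_prop)
  · refine (smoothTransition.contDiff (n := 1)).comp ?_
    have : ContDiff ℝ 1 (fun p : Pt n => ‖p.2‖ ^ 2) := contDiff_snd.norm_sq ℝ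
    exact contDiff_const.mul (contDiff_const.sub (this.div_const _))
  · intro p i
    unfold pdX
    rw [fderiv_time (hD _)]; simp
  · intro p
    unfold pdT
    rw [fderiv_space (hE _)]; simp
  · intro p
    rw [hT', abs_mul, abs_neg, abs_of_pos (by positivity : (0:ℝ) < 1 / T), one_div]
    have := hb (2 - p.1 / T)
    gcongr
    nlinarith [sq_nonneg C]
  · intro p hp
    rw [hT', ho, zero_mul]
    have : p.1 / T ≤ 1 := by rwa [div_le_one hT]
    linarith
  · intro p hp
    apply smoothTransition.one_of_one_le
    have : p.1 / T ≤ 1 := by rwa [div_le_one hT]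
    linarith
  · intro p hp
    apply smoothTransition.zero_of_nonpos
    have : 2 ≤ p.1 / T := by rwa [le_div_iff₀ hT]
    linarith
  · intro p h
    apply smoothTransition.one_of_one_le
    have : ‖p.2‖ ^ 2 / R ^ 2 ≤ 1 / 4 := by
      rw [div_le_iff₀ (by positivity)]
      nlinarith [norm_nonneg p.2]
    linarith
  · intro p h2
    apply smoothTransition.zero_of_nonpos
    have : 1 ≤ ‖p.2‖ ^ 2 / R ^ 2 := by
      rw [le_div_iff₀ (by positivity)]
      nlinarith [norm_nonneg p.2]
    linarith
  · intro p
    by_cases h : R / 2 < ‖p.2‖ ∧ ‖p.2‖ < R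
    · have e : ∑ i, pdX (fun p : Pt n => smoothTransition (4 / 3 * (1 - ‖p.2‖ ^ 2 / R ^ 2))) i p ^ 2
        = (deriv smoothTransition (4 / 3 * (1 - ‖p.2‖ ^ 2 / R ^ 2))) ^ 2 * (64 / 9) * ((R ^ 2)⁻¹) ^ 2 * ‖p.2‖ ^ 2 := by
        simp_rw [hX]
        rw [EuclideanSpace.real_norm_sq_eq, Finset.mul_sum]
        refine Finset.sum_congr rfl fun i _ => ?_
        field_simp
        ring
      rw [e]
      have h1 : (deriv smoothTransition (4 / 3 * (1 - ‖p.2‖ ^ 2 / R ^ 2))) ^ 2 ≤ C ^ 2 := by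
        rw [← sq_abs]
        exact pow_le_pow_left₀ (abs_nonneg _) (hb _) 2
      have h2 : ((R ^ 2)⁻¹) ^ 2 * ‖p.2‖ ^ 2 ≤ (R ^ 2)⁻¹ := by
        have : ‖p.2‖ ^ 2 ≤ R ^ 2 := by nlinarith [norm_nonneg p.2]
        calc ((R ^ 2)⁻¹) ^ 2 * ‖p.2‖ ^ 2 ≤ ((R ^ 2)⁻¹) ^ 2 * R ^ 2 := by gcongr
          _ = (R ^ 2)⁻¹ := by field_simp
      have h3 : (0:ℝ) < (R ^ 2)⁻¹ := by positivity
      calc _ = (deriv smoothTransition (4 / 3 * (1 - ‖p.2‖ ^ 2 / R ^ 2))) ^ 2 * (64 / 9) * (((R ^ 2)⁻¹) ^ 2 * ‖p.2‖ ^ 2) := by ring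
        _ ≤ C ^ 2 * (64 / 9) * (R ^ 2)⁻¹ := by gcongr
        _ ≤ _ := by
          gcongr
          nlinarith [sq_nonneg C]
    · simp_rw [hX, hout p h]
      simp
      positivity
  · intro p h i
    rw [hX, hout p h]
    simp

/-- Rising cut-off in time. -/
lemma exists_rise (n : ℕ) {ε : ℝ} (hε : 0 < ε) : ∃ θ : Pt n → ℝ, ContDiff ℝ 1 θ ∧ (∀ p, 0 ≤ θ p) ∧
    (∀ p, θ p ≤ 1) ∧ (∀ p i, pdX θ i p = 0) ∧ (∀ p, 0 ≤ pdT θ p) ∧ (∀ p, p.1 ≤ ε → θ p = 0) ∧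
    (∀ p, ε < p.1 → 0 < θ p) := by
  obtain ⟨C, hC, hb, hnn, hz, ho⟩ := st_deriv_bound
  have hD : ∀ t : ℝ, HasDerivAt (fun t => smoothTransition (t - ε))
      (deriv smoothTransition (t - ε) * 1) t := by
    intro t
    exact (st_hasDerivAt _).comp t ((hasDerivAt_id t).sub_const ε)
  refine ⟨fun p => smoothTransition (p.1 - ε), ?_, fun p => smoothTransition.nonneg _,
    fun p => smoothTransition.le_one _, ?_, ?_, ?_, ?_⟩
  · exact (smoothTransition.contDiff (n := 1)).comp (by fun_prop)
  · intro p i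
    unfold pdX
    rw [fderiv_time (hD _)]; simp
  · intro p
    unfold pdT
    rw [fderiv_time (hD _)]; simpa using hnn _
  · intro p hp
    exact smoothTransition.zero_of_nonpos (by linarith)
  · intro p hp
    exact smoothTransition.pos_of_pos (by linarith)

/-- auxiliary functions, where gg is the derivative of GG. -/
def gg (s m y : ℝ) : ℝ := 1 + (1 + y / m) ^ (-s)
/-- derivative of `gg` -/
def gg' (s m y : ℝ) : ℝ := -(s / m * (1 + y / m) ^ (-s - 1))
/-- primitive of `gg` -/
def GG (s m y : ℝ) : ℝ := y + m * (1 + y / m) ^ (1 - s) / (1 - s)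

lemma one_le_z {m y : ℝ} (hm : 0 < m) (hy : 0 ≤ y) : 1 ≤ 1 + y / m := by
  have : 0 ≤ y / m := by positivity
  linarith

lemma hasDerivAt_gg {s m y : ℝ} (hm : 0 < m) (hy : 0 ≤ y) :
    HasDerivAt (gg s m) (gg' s m y) y := by
  have hz := one_le_z hm hy
  have h1 : HasDerivAt (fun y => 1 + y / m) (1 / m) y := ((hasDerivAt_id y).div_const m).const_add 1
  have := (h1.rpow_const (p := -s) (Or.inl (by linarith))).const_add 1
  refine HasDerivAt.congr_deriv (f := gg s m) this ?_
  unfold gg'; ring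

lemma hasDerivAt_GG {s m y : ℝ} (hm : 0 < m) (hs : s < 1) (hy : 0 ≤ y) :
    HasDerivAt (GG s m) (gg s m y) y := by
  have hz := one_le_z hm hy
  have h1 : HasDerivAt (fun y => 1 + y / m) (1 / m) y := ((hasDerivAt_id y).div_const m).const_add 1
  have := (hasDerivAt_id y).add
    (((h1.rpow_const (p := 1 - s) (Or.inl (by linarith))).const_mul m).div_const (1 - s))
  refine HasDerivAt.congr_deriv (f := GG s m) this ?_
  unfold gg
  have h3 : 1 - s ≠ 0 := by linarith
  rw [show (1 - s - 1 : ℝ) = -s by ring]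
  field_simp

lemma gg_bounds {s m y : ℝ} (hm : 0 < m) (hs : 0 < s) (hy : 0 ≤ y) :
    1 ≤ gg s m y ∧ gg s m y ≤ 2 := by
  have hz := one_le_z hm hy
  have h1 := Real.rpow_le_one_of_one_le_of_nonpos hz (by linarith : -s ≤ 0)
  have h2 : 0 ≤ (1 + y / m) ^ (-s) := Real.rpow_nonneg (by linarith) _
  unfold gg
  constructor <;> linarith

lemma GG_bounds {s m y : ℝ} (hm : 0 < m) (hs : 0 < s) (hs2 : s ≤ 1 / 2) (hy : 0 ≤ y) :
    0 ≤ GG s m y ∧ GG s m y ≤ 3 * m * (1 + y / m) ^ (1 + s) := by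
  have hz := one_le_z hm hy
  have h0 : 0 ≤ (1 + y / m) ^ (1 - s) := Real.rpow_nonneg (by linarith) _
  have h1 : (1 + y / m) ^ (1 - s) ≤ (1 + y / m) ^ (1 + s) :=
    Real.rpow_le_rpow_of_exponent_le hz (by linarith)
  have h2 : 1 + y / m ≤ (1 + y / m) ^ (1 + s) := by
    have := Real.rpow_le_rpow_of_exponent_le hz (by linarith : (1:ℝ) ≤ 1 + s)
    rwa [Real.rpow_one] at this
  have h3 : y ≤ m * (1 + y / m) := by
    have : m * (1 + y / m) = m + y := by field_simp
    linarith
  have h4 : m * (1 + y / m) ^ (1 - s) / (1 - s) ≤ 2 * (m * (1 + y / m) ^ (1 - s)) := by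
    rw [div_le_iff₀ (by linarith)]
    have : 0 ≤ m * (1 + y / m) ^ (1 - s) := by positivity
    nlinarith
  have h5 : 0 ≤ m * (1 + y / m) ^ (1 - s) / (1 - s) :=
    div_nonneg (by positivity) (by linarith)
  unfold GG
  constructor
  · linarith
  · nlinarith

lemma contDiffOn_comp {n : ℕ} {w : Pt n → ℝ} (hw : ContDiffOn ℝ 1 w (halfSpace n))
    (hw0 : ∀ p ∈ halfSpace n, 0 ≤ w p) {m : ℝ} (hm : 0 < m) (r : ℝ) :
    ContDiffOn ℝ 1 (fun p => (1 + w p / m) ^ r) (halfSpace n) := by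
  apply ContDiffOn.rpow_const_of_ne
  · exact contDiffOn_const.add (hw.div_const m)
  · intro p hp
    have := one_le_z hm (hw0 p hp)
    linarith

lemma contDiff_mul_of_tsupport {n : ℕ} {ζ f : Pt n → ℝ} (hζ : ContDiff ℝ 1 ζ)
    (hs : tsupport ζ ⊆ halfSpace n) (hf : ContDiffOn ℝ 1 f (halfSpace n)) :
    ContDiff ℝ 1 (fun p => ζ p * f p) := by
  rw [contDiff_iff_contDiffAt]
  intro p
  by_cases hp : p ∈ halfSpace n
  · exact hζ.contDiffAt.mul (hf.contDiffAt ((isOpen_halfSpace n).mem_nhds hp))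
  · have hp' : p ∉ tsupport ζ := fun h => hp (hs h)
    have : ζ =ᶠ[nhds p] 0 := notMem_tsupport_iff_eventuallyEq.1 hp'
    refine ContDiffAt.congr_of_eventuallyEq (contDiffAt_const (c := (0:ℝ))) ?_
    filter_upwards [this] with x hx
    simp [hx]

lemma quad_nonneg {n : ℕ} {a : Fin n → Fin n → ℝ} (hsym : ∀ i j, a i j = a j i)
    (hpos : ∀ ξ : Xn n, 0 ≤ ∑ i, ∑ j, a i j * ξ i * ξ j) (x y : Fin n → ℝ) (r t : ℝ) :
    2 * r * t * ∑ i, (∑ j, a i j * x j) * y i ≤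
      r ^ 2 * ∑ i, (∑ j, a i j * x j) * x i + t ^ 2 * ∑ i, ∑ j, a i j * y i * y j := by
  have h := hpos (WithLp.toLp 2 (fun i => r * x i - t * y i))
  have e2 : ∑ i, ∑ j, a i j * y j * x i = ∑ i, ∑ j, a i j * x j * y i := by
    rw [Finset.sum_comm]
    refine Finset.sum_congr rfl fun i _ => Finset.sum_congr rfl fun j _ => ?_
    rw [hsym]; ring
  have e : ∑ i, ∑ j, a i j * (r * x i - t * y i) * (r * x j - t * y j) =
      r ^ 2 * ∑ i, ∑ j, a i j * x j * x i + t ^ 2 * ∑ i, ∑ j, a i j * y i * y j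
      - r * t * ∑ i, ∑ j, a i j * x j * y i - r * t * ∑ i, ∑ j, a i j * y j * x i := by
    simp only [Finset.mul_sum, ← Finset.sum_add_distrib, ← Finset.sum_sub_distrib]
    refine Finset.sum_congr rfl fun i _ => Finset.sum_congr rfl fun j _ => ?_
    ring
  simp only [Finset.sum_mul]
  change 0 ≤ ∑ i, ∑ j, a i j * (r * x i - t * y i) * (r * x j - t * y j) at h
  rw [e, e2] at h
  linarith

/-- scalar part of the pointwise inequality -/
lemma scalar_ineq {N χ D η θT DT g γ G wt hh κw k b Qw Qη Z1 Z2 l1 : ℝ}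
    (hN : 0 ≤ N) (hγ : 0 < γ) (hg1 : 1 ≤ g) (hg2 : g ≤ 2) (hG : 0 ≤ G) (hk : 0 ≤ k)
    (hD0 : 0 ≤ D) (hD1 : D ≤ 1) (hχ0 : 0 ≤ χ) (hχ1 : χ ≤ 1) (hη0 : 0 ≤ η) (hη1 : η ≤ 1)
    (hκ : κw ≤ hh) (hκ0 : 0 ≤ κw) (hθT : 0 ≤ θT * l1)
    (hquad : 2 * (2 * γ * χ) * (g * k * D) * b ≤ (2 * γ * χ) ^ 2 * Qw + (g * k * D) ^ 2 * Qη)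
    (hQη0 : 0 ≤ Qη)
    (hZ1 : k * |DT| * G ≤ Z1) (hZ2 : k ^ 2 * Qη / γ ≤ Z2) :
    (wt - hh) * (N * χ ^ 2 * g) + (N * χ * k * D * g * b + N * χ ^ 2 * (-γ) * Qw) ≤
      ((θT * l1 + N * χ * k * η * DT) * G + N * χ ^ 2 * g * wt) - κw * (N * χ ^ 2) + (Z1 + Z2) * N := by
  have h1 : χ * k * D * g * b - χ ^ 2 * γ * Qw ≤ k ^ 2 * Qη / γ := by
    rw [le_div_iff₀ hγ]
    have hgd : g * D ≤ 2 := by nlinarith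
    have hgd0 : 0 ≤ g * D := by nlinarith
    have h2 : (g * k * D) ^ 2 * Qη ≤ 4 * k ^ 2 * Qη := by
      have : (g * D) ^ 2 ≤ 4 := by nlinarith
      have h3 : 0 ≤ k ^ 2 * Qη := by positivity
      nlinarith
    nlinarith
  have h2 : -(χ * k * η * DT * G) ≤ k * |DT| * G := by
    have hc : χ * η ≤ 1 := by nlinarith
    have hc0 : 0 ≤ χ * η := by positivity
    have h3 : -DT ≤ |DT| := neg_le_abs DT
    have h4 : 0 ≤ k * |DT| * G := by positivity
    calc -(χ * k * η * DT * G) = (χ * η) * (k * G) * (-DT) := by ring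
      _ ≤ (χ * η) * (k * G) * |DT| := by gcongr
      _ = (χ * η) * (k * |DT| * G) := by ring
      _ ≤ 1 * (k * |DT| * G) := by gcongr
      _ = _ := by ring
  have h3 : κw * (N * χ ^ 2) ≤ hh * (N * χ ^ 2 * g) := by
    have : N * χ ^ 2 ≤ N * χ ^ 2 * g := le_mul_of_one_le_right (by positivity) hg1
    exact mul_le_mul hκ this (by positivity) (hκ0.trans hκ)
  have h4 : N * (χ * k * D * g * b - χ ^ 2 * γ * Qw) ≤ N * Z2 :=
    mul_le_mul_of_nonneg_left (h1.trans hZ2) hN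
  have h5 : N * (-(χ * k * η * DT * G)) ≤ N * Z1 := mul_le_mul_of_nonneg_left (h2.trans hZ1) hN
  have h6 : 0 ≤ θT * l1 * G := by positivity
  nlinarith

lemma fderiv_mul_apply' {n : ℕ} {f g : Pt n → ℝ} {p : Pt n} (hf : DifferentiableAt ℝ f p)
    (hg : DifferentiableAt ℝ g p) (v : Pt n) :
    fderiv ℝ (fun p => f p * g p) p v = f p * fderiv ℝ g p v + fderiv ℝ f p v * g p := by
  rw [fderiv_fun_mul hf hg]; simp; ring

lemma fderiv_comp_apply' {n : ℕ} {f : ℝ → ℝ} {f' : ℝ} {g : Pt n → ℝ} {p : Pt n}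
    (hf : HasDerivAt f f' (g p))
    (hg : DifferentiableAt ℝ g p) (v : Pt n) :
    fderiv ℝ (fun p => f (g p)) p v = f' * fderiv ℝ g p v := by
  have := (hf.comp_hasFDerivAt p hg.hasFDerivAt).fderiv
  change fderiv ℝ (f ∘ g) p v = _
  rw [this]; simp

lemma fderiv_zeta {n : ℕ} {θ D η : Pt n → ℝ} (hθ : ContDiff ℝ 1 θ) (hD : ContDiff ℝ 1 D)
    (hη : ContDiff ℝ 1 η) (l : ℕ) (p v : Pt n) :
    fderiv ℝ (fun p => θ p * (D p * η p) ^ (l + 2)) p v =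
      fderiv ℝ θ p v * (D p * η p) ^ (l + 2) +
      θ p * (D p * η p) ^ l * (D p * η p) * ((l + 2 : ℕ) : ℝ) *
        (D p * fderiv ℝ η p v + fderiv ℝ D p v * η p) := by
  have dθ := hθ.differentiable (by norm_num) p
  have dD := hD.differentiable (by norm_num) p
  have dη := hη.differentiable (by norm_num) p
  have dDη : DifferentiableAt ℝ (fun p => D p * η p) p := dD.mul dη
  have dpow : DifferentiableAt ℝ (fun p => (D p * η p) ^ (l + 2)) p := dDη.pow _
  rw [fderiv_mul_apply' dθ dpow,
    fderiv_comp_apply' (f := fun x => x ^ (l + 2)) (g := fun p => D p * η p)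
      (hasDerivAt_pow (l + 2) _) dDη, fderiv_mul_apply' dD dη]
  push_cast
  ring

/-- The region where the cut-off is not locally constant. -/
def shell (n : ℕ) (T R : ℝ) : Set (Pt n) := {p | T < p.1 ∨ R / 2 < ‖p.2‖}

lemma measurableSet_shell (n : ℕ) (T R : ℝ) : MeasurableSet (shell n T R) := by
  apply IsOpen.measurableSet
  exact (isOpen_lt continuous_const continuous_fst).union
    (isOpen_lt continuous_const continuous_snd.norm)

/-- support box -/
def box (n : ℕ) (ε T R : ℝ) : Set (Pt n) := Set.Icc ε (2 * T) ×ˢ Metric.closedBall (0 : Xn n) R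

lemma isCompact_box (n : ℕ) (ε T R : ℝ) : IsCompact (box n ε T R) :=
  isCompact_Icc.prod (isCompact_closedBall _ _)

lemma box_subset {n : ℕ} {ε T R : ℝ} (hε : 0 < ε) : box n ε T R ⊆ halfSpace n := by
  intro p hp
  exact hε.trans_le hp.1.1

lemma zero_off_box {n : ℕ} {C T R ε : ℝ} {D η θ : Pt n → ℝ} (hc : Cutoff n C T R D η)
    (hθ : ∀ p, p.1 ≤ ε → θ p = 0) {l : ℕ} (hl : l ≠ 0) {p : Pt n} (hp : p ∉ box n ε T R) :
    θ p * (D p * η p) ^ l = 0 := by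
  by_cases h1 : p.1 ≤ ε
  · rw [hθ p h1, zero_mul]
  by_cases h2 : 2 * T ≤ p.1
  · rw [hc.Deq0 p h2]; simp [hl]
  by_cases h3 : R ≤ ‖p.2‖
  · rw [hc.ηeq0 p h3]; simp [hl]
  exfalso
  apply hp
  push Not at h1 h2 h3
  refine ⟨⟨h1.le, h2.le⟩, ?_⟩
  simpa using h3.le

/-- The basic integral estimate. -/
lemma core {n : ℕ} {α c q κ s C ε : ℝ} (hc0 : 0 < c) (hκ : 0 < κ) (hs : 0 < s) (hs2 : s ≤ 1 / 2)
    (hq : 1 < q) (hC : 0 < C) (hε : 0 < ε) (l : ℕ) (hl : l ≠ 0)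
    {a : Fin n → Fin n → Pt n → ℝ} {A : Pt n → ℝ} {w h θ : Pt n → ℝ}
    (ha_meas : ∀ i j, Measurable (a i j)) (ha_lb : ∀ i j, LB (a i j))
    (ha_symm : ∀ i j, ∀ᵐ p ∂(volume.restrict (halfSpace n)), a i j p = a j i p)
    (hform : ∀ᵐ p ∂(volume.restrict (halfSpace n)), ∀ ξ : Xn n,
      0 ≤ ∑ i, ∑ j, a i j p * ξ i * ξ j ∧
      ∑ i, ∑ j, a i j p * ξ i * ξ j ≤ A p * ‖ξ‖ ^ 2)
    (hcond8 : Cond8 A α c)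
    (hw : ContDiffOn ℝ 1 w (halfSpace n)) (hw0 : ∀ p ∈ halfSpace n, 0 ≤ w p)
    (hh : ContinuousOn h (halfSpace n)) (hhw : ∀ p ∈ halfSpace n, κ * w p ^ q ≤ h p)
    (H : ∀ φ : Pt n → ℝ, ContDiff ℝ 1 φ → HasCompactSupport φ →
      tsupport φ ⊆ halfSpace n → (∀ p, 0 ≤ φ p) →
      0 ≤ ∫ p in halfSpace n, ((pdT w p - h p) * φ p + ∑ i, (∑ j, a i j p * pdX w j p) * pdX φ i p))
    (hθc : ContDiff ℝ 1 θ) (hθ0 : ∀ p, 0 ≤ θ p) (hθX : ∀ p i, pdX θ i p = 0)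
    (hθT : ∀ p, 0 ≤ pdT θ p) (hθε : ∀ p, p.1 ≤ ε → θ p = 0) :
    ∃ C1 : ℝ, 0 < C1 ∧ ∀ R m : ℝ, 1 < R → 0 < m → ∀ D η : Pt n → ℝ, Cutoff n C (R ^ α) R D η →
      κ * ∫ p in halfSpace n, w p ^ q * (θ p * (D p * η p) ^ (l + 2)) ≤
      C1 * (R ^ α)⁻¹ * m * ∫ p in halfSpace n, (shell n (R ^ α) R).indicator 1 p *
        (1 + w p / m) ^ (1 + s) * (θ p * (D p * η p) ^ l) := by
  set k : ℝ := ((l + 2 : ℕ) : ℝ) with hk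
  have hk0 : 0 < k := by positivity
  refine ⟨3 * k * C + k ^ 2 * (c * C) / s, by positivity, fun R m hR hm D η hcut => ?_⟩
  have hR0 : 0 < R := by linarith
  set T := R ^ α with hT
  have hT0 : 0 < T := by positivity
  have hSo := isOpen_halfSpace n
  have hSm := measurableSet_halfSpace n
  set ζ : Pt n → ℝ := fun p => θ p * (D p * η p) ^ (l + 2) with hζ
  have hζc : ContDiff ℝ 1 ζ := hθc.mul ((hcut.cD.mul hcut.cη).pow _)
  have hKc := isCompact_box n ε T R
  have hKS : box n ε T R ⊆ halfSpace n := box_subset hε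
  have hζ0 : ∀ p, 0 ≤ ζ p := fun p =>
    mul_nonneg (hθ0 p) (pow_nonneg (mul_nonneg (hcut.D0 p) (hcut.η0 p)) _)
  have hζts : tsupport ζ ⊆ box n ε T R := by
    apply closure_minimal _ hKc.isClosed
    intro p hp
    by_contra hpK
    exact hp (zero_off_box hcut hθε (by omega) hpK)
  have hts := hζts.trans hKS
  have hgC : ContDiffOn ℝ 1 (fun p => gg s m (w p)) (halfSpace n) :=
    contDiffOn_const.add (contDiffOn_comp hw hw0 hm _)
  have hGC : ContDiffOn ℝ 1 (fun p => GG s m (w p)) (halfSpace n) :=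
    hw.add ((contDiffOn_const.mul (contDiffOn_comp hw hw0 hm _)).div_const _)
  set φ : Pt n → ℝ := fun p => ζ p * gg s m (w p) with hφ
  set F : Pt n → ℝ := fun p => ζ p * GG s m (w p) with hF
  have hφc : ContDiff ℝ 1 φ := contDiff_mul_of_tsupport hζc hts hgC
  have hFc : ContDiff ℝ 1 F := contDiff_mul_of_tsupport hζc hts hGC
  have hφts : tsupport φ ⊆ box n ε T R := (tsupport_mul_subset_left).trans hζts
  have hFts : tsupport F ⊆ box n ε T R := (tsupport_mul_subset_left).trans hζts
  have hφcs : HasCompactSupport φ := hKc.of_isClosed_subset (isClosed_tsupport _) hφts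
  have hFcs : HasCompactSupport F := hKc.of_isClosed_subset (isClosed_tsupport _) hFts
  have hφ0 : ∀ p, 0 ≤ φ p := by
    intro p
    by_cases hp : p ∈ halfSpace n
    · exact mul_nonneg (hζ0 p) (by linarith [(gg_bounds hm hs (hw0 p hp)).1])
    · have : ζ p = 0 := image_eq_zero_of_notMem_tsupport (fun h => hp (hts h))
      simp [hφ, this]
  have h0 := H φ hφc hφcs (hφts.trans hKS) hφ0
  have hF0 := integral_pdT_eq_zero hFc hFcs (hFts.trans hKS)
  -- continuity facts
  have hwc : ContinuousOn w (halfSpace n) := hw.continuousOn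
  have hwd : ContinuousOn (fderiv ℝ w) (halfSpace n) :=
    hw.continuousOn_fderiv_of_isOpen hSo (by norm_num)
  have hwT : ContinuousOn (pdT w) (halfSpace n) := hwd.clm_apply continuousOn_const
  have hwX : ∀ j, ContinuousOn (pdX w j) (halfSpace n) := fun j => hwd.clm_apply continuousOn_const
  have hφd : Continuous (fderiv ℝ φ) := hφc.continuous_fderiv (by norm_num)
  have hφX : ∀ j, Continuous (pdX φ j) := fun j => hφd.clm_apply continuous_const
  have hFd : Continuous (fderiv ℝ F) := hFc.continuous_fderiv (by norm_num)
  have hFT : Continuous (pdT F) := hFd.clm_apply continuous_const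
  -- integrability
  have hI1 : IntegrableOn (fun p => (pdT w p - h p) * φ p +
      ∑ i, (∑ j, a i j p * pdX w j p) * pdX φ i p) (halfSpace n) := by
    refine integrable_of_LB ?_ ?_ hKc hKS ?_
    · refine LB.add (LB.of_continuousOn ((hwT.sub hh).mul hφc.continuous.continuousOn)) ?_
      exact LB.sum _ fun i => LB.mul (LB.sum _ fun j => (ha_lb i j).mul (LB.of_continuousOn (hwX j)))
        (LB.of_continuousOn (hφX i).continuousOn)
    · refine AEStronglyMeasurable.add
        (((hwT.sub hh).mul hφc.continuous.continuousOn).aestronglyMeasurable hSm) ?_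
      refine Finset.aestronglyMeasurable_fun_sum _ fun i _ => AEStronglyMeasurable.mul ?_
        (hφX i).aestronglyMeasurable
      exact Finset.aestronglyMeasurable_fun_sum _ fun j _ =>
        ((ha_meas i j).aestronglyMeasurable).mul ((hwX j).aestronglyMeasurable hSm)
    · intro p hp
      have e1 : φ p = 0 := image_eq_zero_of_notMem_tsupport (fun h => hp (hφts h))
      have e2 : fderiv ℝ φ p = 0 := by
        by_contra hne
        exact hp (hφts (support_fderiv_subset ℝ hne))
      simp [e1, pdX, e2]
  have hI2 : IntegrableOn (pdT F) (halfSpace n) := by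
    refine integrable_of_LB (LB.of_continuousOn hFT.continuousOn) hFT.aestronglyMeasurable hKc hKS ?_
    intro p hp
    have e2 : fderiv ℝ F p = 0 := by
      by_contra hne
      exact hp (hFts (support_fderiv_subset ℝ hne))
    simp [pdT, e2]
  have hI3 : IntegrableOn (fun p => w p ^ q * ζ p) (halfSpace n) := by
    have : ContinuousOn (fun p => w p ^ q * ζ p) (halfSpace n) :=
      (hwc.rpow_const (fun p _ => Or.inr (by linarith))).mul hζc.continuous.continuousOn
    refine integrable_of_LB (LB.of_continuousOn this) (this.aestronglyMeasurable hSm) hKc hKS ?_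
    intro p hp
    rw [show ζ p = 0 from zero_off_box hcut hθε (by omega) hp, mul_zero]
  have hI4 : IntegrableOn (fun p => (shell n T R).indicator 1 p *
        (1 + w p / m) ^ (1 + s) * (θ p * (D p * η p) ^ l)) (halfSpace n) := by
    have c1 : ContinuousOn (fun p => (1 + w p / m) ^ (1 + s)) (halfSpace n) :=
      (contDiffOn_comp hw hw0 hm _).continuousOn
    have c2 : Continuous (fun p => (θ p * (D p * η p) ^ l)) :=
      hθc.continuous.mul ((hcut.cD.continuous.mul hcut.cη.continuous).pow _)
    refine integrable_of_LB (((?_ : LB _).mul (LB.of_continuousOn c1)).mul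
      (LB.of_continuousOn c2.continuousOn)) ?_ hKc hKS ?_
    · intro K _ _
      refine ⟨1, fun p _ => ?_⟩
      by_cases hp : p ∈ shell n T R <;> simp [hp]
    · exact (((measurable_one.indicator (measurableSet_shell n T R)).aestronglyMeasurable).mul
        (c1.aestronglyMeasurable hSm)).mul c2.aestronglyMeasurable
    · intro p hp
      rw [zero_off_box hcut hθε hl hp, mul_zero]
  -- pointwise inequality
  have hA8 : ∀ᵐ p ∂(volume.restrict (halfSpace n)),
      (R / 2 < ‖p.2‖ ∧ ‖p.2‖ < R) → A p ≤ c * R ^ (2 - α) := by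
    have := hcond8 R hR
    rw [ae_restrict_iff' (by
      apply IsOpen.measurableSet
      exact (isOpen_lt continuous_const continuous_fst).inter
        ((isOpen_lt continuous_const continuous_snd.norm).inter
          (isOpen_lt continuous_snd.norm continuous_const)))] at this
    rw [ae_restrict_iff' hSm]
    filter_upwards [this] with p hp hp0 hpR
    exact hp ⟨hp0, hpR.1, hpR.2⟩
  have hpt : ∀ᵐ p ∂(volume.restrict (halfSpace n)),
      (pdT w p - h p) * φ p + ∑ i, (∑ j, a i j p * pdX w j p) * pdX φ i p ≤
      pdT F p - κ * (w p ^ q * ζ p) + (3 * k * C + k ^ 2 * (c * C) / s) * T⁻¹ * m *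
        ((shell n T R).indicator 1 p * (1 + w p / m) ^ (1 + s) * (θ p * (D p * η p) ^ l)) := by
    have hsy : ∀ᵐ p ∂(volume.restrict (halfSpace n)), ∀ i j, a i j p = a j i p := by
      rw [ae_all_iff]; intro i; rw [ae_all_iff]; intro j; exact ha_symm i j
    filter_upwards [hsy, hform, hA8, ae_restrict_mem hSm] with p psym pform pA pS
    have dw : DifferentiableAt ℝ w p :=
      (hw.differentiableOn (by norm_num)).differentiableAt (hSo.mem_nhds pS)
    have dg : DifferentiableAt ℝ (fun p => gg s m (w p)) p :=
      (hgC.differentiableOn (by norm_num)).differentiableAt (hSo.mem_nhds pS)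
    have dG : DifferentiableAt ℝ (fun p => GG s m (w p)) p :=
      (hGC.differentiableOn (by norm_num)).differentiableAt (hSo.mem_nhds pS)
    have dζ : DifferentiableAt ℝ ζ p := hζc.differentiable (by norm_num) p
    have hwp := hw0 p pS
    have hz := one_le_z hm hwp
    set z := 1 + w p / m with hzdef
    set N := θ p * (D p * η p) ^ l with hN
    set χ := D p * η p with hχ
    set γ := s / m * z ^ (-s - 1) with hγ
    have hγ0 : 0 < γ := by positivity
    have hD0 := hcut.D0 p
    have hD1 := hcut.D1 p
    have hη0 := hcut.η0 p
    have hη1 := hcut.η1 p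
    have hχ0 : 0 ≤ χ := mul_nonneg hD0 hη0
    have hχ1 : χ ≤ 1 := mul_le_one₀ hD1 hη0 hη1
    have hN0 : 0 ≤ N := mul_nonneg (hθ0 p) (pow_nonneg hχ0 _)
    obtain ⟨hg1, hg2⟩ := gg_bounds hm hs hwp
    obtain ⟨hG0, hG1⟩ := GG_bounds hm hs hs2 hwp
    have eφX : ∀ i, pdX φ i p = N * χ * k * D p * gg s m (w p) * pdX η i p + N * χ ^ 2 * (-γ) * pdX w i p := by
      intro i
      have e1 := fderiv_zeta hθc hcut.cD hcut.cη l p ((0, EuclideanSpace.single i 1) : Pt n)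
      have t1 := hθX p i
      have t2 := hcut.XD p i
      unfold pdX at t1 t2 ⊢
      rw [t1, t2] at e1
      rw [hφ, fderiv_mul_apply' dζ dg, fderiv_comp_apply' (hasDerivAt_gg hm hwp) dw, hζ, e1]
      simp only [gg', ← hzdef, ← hχ, ← hk]
      rw [hN, hγ]
      ring
    have eFT : pdT F p = (pdT θ p * χ ^ (l + 2) + N * χ * k * η p * pdT D p) * GG s m (w p)
        + N * χ ^ 2 * gg s m (w p) * pdT w p := by
      have e1 := fderiv_zeta hθc hcut.cD hcut.cη l p ((1, 0) : Pt n)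
      have t1 := hcut.Tη p
      unfold pdT at t1 ⊢
      rw [t1] at e1
      rw [hF, fderiv_mul_apply' dζ dG, fderiv_comp_apply' (hasDerivAt_GG hm (by linarith) hwp) dw, hζ, e1]
      simp only [← hχ, ← hk]
      rw [hN]
      ring
    have eζ : ζ p = N * χ ^ 2 := by rw [hζ, hN]; ring
    have esum : ∑ i, (∑ j, a i j p * pdX w j p) * pdX φ i p =
        N * χ * k * D p * gg s m (w p) * (∑ i, (∑ j, a i j p * pdX w j p) * pdX η i p)
        + N * χ ^ 2 * (-γ) * (∑ i, (∑ j, a i j p * pdX w j p) * pdX w i p) := by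
      simp_rw [eφX]
      rw [Finset.mul_sum, Finset.mul_sum, ← Finset.sum_add_distrib]
      exact Finset.sum_congr rfl fun i _ => by ring
    have hquad := quad_nonneg (a := fun i j => a i j p) psym (fun ξ => (pform ξ).1)
      (fun i => pdX w i p) (fun i => pdX η i p) (2 * γ * χ) (gg s m (w p) * k * D p)
    set Qη := ∑ i, ∑ j, a i j p * pdX η i p * pdX η j p with hQη
    have hQ := pform (WithLp.toLp 2 (fun i => pdX η i p))
    rw [EuclideanSpace.real_norm_sq_eq] at hQ
    change 0 ≤ Qη ∧ Qη ≤ A p * ∑ i, pdX η i p ^ 2 at hQ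
    set ι : ℝ := (shell n T R).indicator 1 p with hι
    have hι0 : 0 ≤ ι := Set.indicator_nonneg (fun _ _ => zero_le_one) p
    have hQb : Qη ≤ c * C * T⁻¹ * ι := by
      by_cases hx : R / 2 < ‖p.2‖ ∧ ‖p.2‖ < R
      · have hmem : p ∈ shell n T R := Or.inr hx.1
        have : ι = 1 := by simp [hι, hmem]
        rw [this, mul_one]
        calc Qη ≤ A p * ∑ i, pdX η i p ^ 2 := hQ.2
          _ ≤ (c * R ^ (2 - α)) * (C * (R ^ 2)⁻¹) := by
            apply mul_le_mul (pA hx) (hcut.Xη p) (Finset.sum_nonneg fun i _ => sq_nonneg _)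
            positivity
          _ = c * C * T⁻¹ := by
            rw [Real.rpow_sub hR0, Real.rpow_two, hT]
            field_simp
      · have : Qη = 0 := by
          rw [hQη]
          simp [hcut.Xη0 p hx]
        rw [this]
        positivity
    have hDTb : |pdT D p| ≤ C * T⁻¹ * ι := by
      by_cases hx : p.1 ≤ T
      · rw [hcut.TD0 p hx, abs_zero]; positivity
      · have hmem : p ∈ shell n T R := Or.inl (not_le.1 hx)
        have : ι = 1 := by simp [hι, hmem]
        rw [this, mul_one]
        exact hcut.TD p
    have hZ1 : k * |pdT D p| * GG s m (w p) ≤ k * (C * T⁻¹ * ι) * (3 * m * z ^ (1 + s)) := by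
      gcongr
    have hZ2 : k ^ 2 * Qη / γ ≤ k ^ 2 * (c * C * T⁻¹ * ι) * (m / s * z ^ (1 + s)) := by
      have : k ^ 2 * Qη / γ = k ^ 2 * Qη * (m / s * z ^ (1 + s)) := by
        rw [hγ, show (-s - 1) = -(1 + s) by ring, Real.rpow_neg (by linarith)]
        have : 0 < z ^ (1 + s) := by positivity
        field_simp
      rw [this]
      gcongr
    have hfin := scalar_ineq (wt := pdT w p) (hh := h p) (κw := κ * w p ^ q) (η := η p) (DT := pdT D p)
      (θT := pdT θ p) (l1 := χ ^ (l + 2)) hN0 hγ0 hg1 hg2 hG0 hk0.le hD0 hD1 hχ0 hχ1 hη0 hη1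
      (hhw p pS) (by positivity) (mul_nonneg (hθT p) (by positivity)) hquad hQ.1 hZ1 hZ2
    rw [esum, eFT]
    have eφ : φ p = N * χ ^ 2 * gg s m (w p) := by rw [hφ]; simp only; rw [eζ]
    rw [eφ, eζ]
    refine hfin.trans (le_of_eq ?_)
    field_simp
  have hint := integral_mono_ae hI1 ((hI2.sub (hI3.const_mul κ)).add
    (hI4.const_mul ((3 * k * C + k ^ 2 * (c * C) / s) * T⁻¹ * m))) hpt
  have hsplit : ∫ p in halfSpace n, (pdT F p - κ * (w p ^ q * ζ p) + (3 * k * C + k ^ 2 * (c * C) / s) * T⁻¹ * m *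
        ((shell n T R).indicator 1 p * (1 + w p / m) ^ (1 + s) * (θ p * (D p * η p) ^ l))) =
      0 - κ * (∫ p in halfSpace n, w p ^ q * ζ p) + (3 * k * C + k ^ 2 * (c * C) / s) * T⁻¹ * m *
        ∫ p in halfSpace n, ((shell n T R).indicator 1 p * (1 + w p / m) ^ (1 + s) * (θ p * (D p * η p) ^ l)) := by
    have hsub : IntegrableOn (fun p => pdT F p - κ * (w p ^ q * ζ p)) (halfSpace n) :=
      hI2.sub (hI3.const_mul κ)
    rw [integral_add hsub (hI4.const_mul _), integral_sub hI2 (hI3.const_mul κ), hF0,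
      integral_const_mul, integral_const_mul]
  have hint2 := h0.trans hint
  have hint3 := hint2.trans_eq hsplit
  linarith

lemma one_add_rpow_le {p y : ℝ} (hp : 0 ≤ p) (hy : 0 ≤ y) :
    (1 + y) ^ p ≤ 2 ^ p * (1 + y ^ p) := by
  have hyp := Real.rpow_nonneg hy p
  have h2 : (0:ℝ) ≤ 2 ^ p := by positivity
  rcases le_total y 1 with h | h
  · have := Real.rpow_le_rpow (by linarith) (by linarith : 1 + y ≤ 2) hp
    nlinarith
  · have := Real.rpow_le_rpow (by linarith) (by linarith : 1 + y ≤ 2 * y) hp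
    rw [Real.mul_rpow (by norm_num) hy] at this
    nlinarith

lemma young_chi {p q e : ℝ} (hp : 1 ≤ p) (hpq : p < q) (he : 0 < e) {l : ℕ}
    (hl : (l + 2) * p ≤ l * q) :
    ∃ C2 : ℝ, 0 ≤ C2 ∧ ∀ y χ : ℝ, 0 ≤ y → 0 ≤ χ → χ ≤ 1 →
      (1 + y) ^ p * χ ^ l ≤ e * (y ^ q * χ ^ (l + 2)) + C2 := by
  have hp0 : 0 < p := by linarith
  set X : ℝ := (2 ^ p / e) ^ (1 / (q - p)) with hX
  have hX0 : 0 < X := by positivity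
  have hXe : e * X ^ (q - p) = 2 ^ p := by
    rw [hX, ← Real.rpow_mul (by positivity), one_div_mul_cancel (by linarith), Real.rpow_one]
    field_simp
  refine ⟨2 ^ p + 2 ^ p * X ^ p, by positivity, fun y χ hy hχ0 hχ1 => ?_⟩
  have h2 : (0:ℝ) < 2 ^ p := by positivity
  have hl1 : χ ^ l ≤ 1 := pow_le_one₀ hχ0 hχ1
  have hl0 : 0 ≤ χ ^ l := pow_nonneg hχ0 _
  set x : ℝ := y * χ ^ ((l:ℝ) / p) with hx
  have hx0 : 0 ≤ x := by positivity
  have hxp : x ^ p = y ^ p * χ ^ l := by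
    rw [hx, Real.mul_rpow hy (by positivity), ← Real.rpow_mul hχ0, div_mul_cancel₀ _ hp0.ne',
      Real.rpow_natCast]
  have hxq : x ^ q ≤ y ^ q * χ ^ (l + 2) := by
    rw [hx, Real.mul_rpow hy (by positivity), ← Real.rpow_mul hχ0]
    have : χ ^ ((l:ℝ) / p * q) ≤ χ ^ (l + 2) := by
      rw [← Real.rpow_natCast]
      apply Real.rpow_le_rpow_of_exponent_ge_of_imp hχ0 hχ1
      · push_cast
        rw [div_mul_eq_mul_div, le_div_iff₀ hp0]
        linarith
      · intro _ h
        exfalso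
        have : (0:ℝ) < ((l + 2 : ℕ) : ℝ) := by positivity
        have h3 : (l:ℝ) * q ≥ (l + 2) * p := hl
        have h4 : (0:ℝ) < (l + 2) * p := by positivity
        have h5 : 0 < (l:ℝ) / p * q := by rw [div_mul_eq_mul_div]; exact div_pos (by linarith) hp0
        linarith
    gcongr
  have hmain : 2 ^ p * x ^ p ≤ e * x ^ q + 2 ^ p * X ^ p := by
    rcases le_total x X with h | h
    · have := Real.rpow_le_rpow hx0 h hp0.le
      have h3 : 0 ≤ e * x ^ q := by positivity
      nlinarith
    · have hxpos : 0 < x := hX0.trans_le h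
      have h4 : X ^ (q - p) ≤ x ^ (q - p) := Real.rpow_le_rpow hX0.le h (by linarith)
      have h5 : x ^ q = x ^ (q - p) * x ^ p := by rw [← Real.rpow_add hxpos]; congr 1; ring
      have h6 : 0 ≤ 2 ^ p * X ^ p := by positivity
      have h7 : 2 ^ p * x ^ p ≤ e * x ^ q := by
        rw [← hXe, h5, mul_assoc]
        gcongr
      linarith
  calc (1 + y) ^ p * χ ^ l ≤ 2 ^ p * (1 + y ^ p) * χ ^ l := by
        gcongr; exact one_add_rpow_le hp0.le hy
    _ = 2 ^ p * χ ^ l + 2 ^ p * x ^ p := by rw [hxp]; ring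
    _ ≤ 2 ^ p + (e * x ^ q + 2 ^ p * X ^ p) := by
        have : 2 ^ p * χ ^ l ≤ 2 ^ p := mul_le_of_le_one_right h2.le hl1
        linarith
    _ ≤ _ := by
        have : e * x ^ q ≤ e * (y ^ q * χ ^ (l + 2)) := by gcongr
        linarith

lemma vol_box (n : ℕ) : ∃ V : ℝ, 0 < V ∧ ∀ ε T R : ℝ, 0 < ε → 0 < T → 0 < R →
    volume.real (box n ε T R) ≤ V * T * R ^ n := by
  refine ⟨2 * volume.real (Metric.ball (0 : Xn n) 1) + 1, by positivity, fun ε T R hε hT hR => ?_⟩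
  unfold box
  rw [Measure.volume_eq_prod, measureReal_prod_prod, Measure.addHaar_real_closedBall _ _ hR.le]
  have h1 : volume.real (Set.Icc ε (2 * T)) ≤ 2 * T := by
    rw [Measure.real, Real.volume_Icc]
    rw [ENNReal.toReal_ofReal']
    exact max_le (by linarith) (by linarith)
  have h2 : Module.finrank ℝ (Xn n) = n := by simp
  rw [h2]
  have hb : 0 ≤ volume.real (Metric.ball (0 : Xn n) 1) := measureReal_nonneg
  calc _ ≤ 2 * T * (R ^ n * volume.real (Metric.ball (0 : Xn n) 1)) := by gcongr
    _ ≤ _ := by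
      have : 0 < T * R ^ n := by positivity
      nlinarith

lemma scale_facts {n : ℕ} {α q : ℝ} (hn : 1 ≤ n) (hα : 0 < α) (hq1 : 1 < q) (hq2 : q ≤ 1 + α / n)
    {R δ : ℝ} (hR : 1 < R) (hδ : 0 < δ) :
    ∃ m : ℝ, 0 < m ∧ (∀ y, 0 ≤ y → (R ^ α)⁻¹ * m * (y / m) ^ q = δ ^ (1 - q) * y ^ q) ∧
      m * R ^ n ≤ δ := by
  have hR0 : 0 < R := by linarith
  refine ⟨δ * R ^ (-(α / (q - 1))), by positivity, fun y hy => ?_, ?_⟩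
  · set m := δ * R ^ (-(α / (q - 1))) with hm
    have hm0 : 0 < m := by positivity
    have h1 : m ^ (1 - q) = δ ^ (1 - q) * R ^ α := by
      rw [hm, Real.mul_rpow hδ.le (by positivity), ← Real.rpow_mul hR0.le]
      congr 2
      have : q - 1 ≠ 0 := by linarith
      field_simp
      ring
    have h2 : m ^ (1 - q) = m / m ^ q := by rw [Real.rpow_sub hm0, Real.rpow_one]
    rw [Real.div_rpow hy hm0.le]
    have h3 : (R ^ α)⁻¹ * m * (y ^ q / m ^ q) = (R ^ α)⁻¹ * (m / m ^ q) * y ^ q := by ring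
    rw [h3, ← h2, h1]
    have : 0 < R ^ α := by positivity
    field_simp
  · rw [mul_assoc, ← Real.rpow_natCast R n, ← Real.rpow_add hR0]
    have : R ^ (-(α / (q - 1)) + (n:ℝ)) ≤ 1 := by
      apply Real.rpow_le_one_of_one_le_of_nonpos hR.le
      have hn0 : (0:ℝ) < n := by exact_mod_cast hn
      have : (n:ℝ) ≤ α / (q - 1) := by
        rw [le_div_iff₀ (by linarith)]
        have h5 : q - 1 ≤ α / n := by linarith
        rw [le_div_iff₀ hn0] at h5
        linarith
      linarith
    nlinarith

open Filter Topology in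
lemma concl {n : ℕ} {α q κ s C ε C1 : ℝ} (hn : 1 ≤ n) (hα : 0 < α) (hq1 : 1 < q)
    (hq2 : q ≤ 1 + α / n) (hκ : 0 < κ) (hs : 0 < s) (hsq : 1 + s < q)
    (hε : 0 < ε) (hC1 : 0 < C1) {l : ℕ} (hl : l ≠ 0) (hlq : (l + 2) * (1 + s) ≤ l * q)
    {w θ : Pt n → ℝ}
    (hw : ContDiffOn ℝ 1 w (halfSpace n)) (hw0 : ∀ p ∈ halfSpace n, 0 ≤ w p)
    (hθc : ContDiff ℝ 1 θ) (hθ0 : ∀ p, 0 ≤ θ p) (hθ1 : ∀ p, θ p ≤ 1)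
    (hθε : ∀ p, p.1 ≤ ε → θ p = 0)
    (hcut : ∀ T R : ℝ, 0 < T → 0 < R → ∃ D η : Pt n → ℝ, Cutoff n C T R D η)
    (hcore : ∀ R m : ℝ, 1 < R → 0 < m → ∀ D η : Pt n → ℝ, Cutoff n C (R ^ α) R D η →
      κ * ∫ p in halfSpace n, w p ^ q * (θ p * (D p * η p) ^ (l + 2)) ≤
      C1 * (R ^ α)⁻¹ * m * ∫ p in halfSpace n, (shell n (R ^ α) R).indicator 1 p *
        (1 + w p / m) ^ (1 + s) * (θ p * (D p * η p) ^ l)) :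
    ∀ p ∈ halfSpace n, w p ^ q * θ p = 0 := by
  have hSm := measurableSet_halfSpace n
  have hwc : ContinuousOn w (halfSpace n) := hw.continuousOn
  have hwq : ContinuousOn (fun p => w p ^ q) (halfSpace n) :=
    hwc.rpow_const (fun p _ => Or.inr (by linarith))
  set μS : Measure (Pt n) := volume.restrict (halfSpace n) with hμS
  set f : Pt n → ℝ := fun p => w p ^ q * θ p with hf
  have hfc : ContinuousOn f (halfSpace n) := hwq.mul hθc.continuous.continuousOn
  have hf0 : ∀ p ∈ halfSpace n, 0 ≤ f p := fun p hp =>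
    mul_nonneg (Real.rpow_nonneg (hw0 p hp) _) (hθ0 p)
  have hf0ae : ∀ᵐ p ∂μS, 0 ≤ f p := by
    filter_upwards [ae_restrict_mem hSm] with p hp using hf0 p hp
  obtain ⟨V, hV, hvol⟩ := vol_box n
  obtain ⟨C2, hC2, hyoung⟩ := young_chi (p := 1 + s) (q := q) (e := κ / (2 * C1)) (by linarith) hsq
    (by positivity) hlq
  -- the cut-off integrals
  have hI : ∀ {R : ℝ} {D η : Pt n → ℝ}, Cutoff n C (R ^ α) R D η →
      Integrable (fun p => w p ^ q * (θ p * (D p * η p) ^ (l + 2))) μS := by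
    intro R D η hc
    have : ContinuousOn (fun p => w p ^ q * (θ p * (D p * η p) ^ (l + 2))) (halfSpace n) :=
      hwq.mul (hθc.continuous.mul
        ((hc.cD.continuous.mul hc.cη.continuous).pow _)).continuousOn
    refine integrable_of_LB (LB.of_continuousOn this) (this.aestronglyMeasurable hSm)
      (isCompact_box n ε (R ^ α) R) (box_subset hε) ?_
    intro p hp
    rw [zero_off_box hc hθε (by omega) hp, mul_zero]
  have hbi : ∀ R : ℝ, Integrable ((box n ε (R ^ α) R).indicator (1 : Pt n → ℝ)) μS := by
    intro R
    have hc := isCompact_box n ε (R ^ α) R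
    apply Integrable.integrableOn
    rw [integrable_indicator_iff hc.measurableSet]
    exact integrableOn_const hc.measure_lt_top.ne
  have hbint : ∀ R : ℝ, 1 < R → ∫ p, (box n ε (R ^ α) R).indicator (1 : Pt n → ℝ) p ∂μS ≤
      V * R ^ α * R ^ n := by
    intro R hR
    have hR0 : 0 < R := by linarith
    have hc := isCompact_box n ε (R ^ α) R
    rw [integral_indicator_one hc.measurableSet]
    refine le_trans ?_ (hvol ε (R ^ α) R hε (by positivity) hR0)
    rw [hμS, measureReal_restrict_apply hc.measurableSet]
    exact measureReal_mono Set.inter_subset_left hc.measure_lt_top.ne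
  have hχ : ∀ {R : ℝ} {D η : Pt n → ℝ}, Cutoff n C (R ^ α) R D η → ∀ p,
      0 ≤ D p * η p ∧ D p * η p ≤ 1 := fun hc p =>
    ⟨mul_nonneg (hc.D0 p) (hc.η0 p), mul_le_one₀ (hc.D1 p) (hc.η0 p) (hc.η1 p)⟩
  have hι : ∀ (R : ℝ) (p : Pt n), 0 ≤ (shell n (R ^ α) R).indicator (1 : Pt n → ℝ) p ∧
      (shell n (R ^ α) R).indicator (1 : Pt n → ℝ) p ≤ 1 := by
    intro R p
    by_cases hp : p ∈ shell n (R ^ α) R <;> simp [hp]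
  -- Step 1: uniform bound
  have hstep1 : ∀ R : ℝ, 1 < R → ∀ D η : Pt n → ℝ, Cutoff n C (R ^ α) R D η →
      ∫ p in halfSpace n, w p ^ q * (θ p * (D p * η p) ^ (l + 2)) ≤ 2 * C1 * C2 * V / κ := by
    intro R hR D η hc
    have hR0 : 0 < R := by linarith
    have hT0 : 0 < R ^ α := by positivity
    obtain ⟨m, hm, hm1, hm2⟩ := scale_facts hn hα hq1 hq2 hR one_pos
    have h1 := hcore R m hR hm D η hc
    have hmono : ∫ p in halfSpace n, (shell n (R ^ α) R).indicator 1 p *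
        (1 + w p / m) ^ (1 + s) * (θ p * (D p * η p) ^ l) ≤
        ∫ p in halfSpace n, (κ / (2 * C1) * (m ^ q)⁻¹ * (w p ^ q * (θ p * (D p * η p) ^ (l + 2))) +
          C2 * (box n ε (R ^ α) R).indicator 1 p) := by
      apply integral_mono_of_nonneg
      · filter_upwards [ae_restrict_mem hSm] with p hp
        have := one_le_z hm (hw0 p hp)
        exact mul_nonneg (mul_nonneg (hι R p).1 (by positivity))
          (mul_nonneg (hθ0 p) (pow_nonneg (hχ hc p).1 _))
      · exact ((hI hc).const_mul _).add ((hbi R).const_mul _)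
      · filter_upwards [ae_restrict_mem hSm] with p hp
        have hwp := hw0 p hp
        have hz := one_le_z hm hwp
        by_cases hb : p ∈ box n ε (R ^ α) R
        · have hy := hyoung (w p / m) (D p * η p) (by positivity) (hχ hc p).1 (hχ hc p).2
          rw [Real.div_rpow hwp hm.le] at hy
          simp only [Set.indicator_of_mem hb, Pi.one_apply, mul_one]
          have hχ0 := (hχ hc p).1
          have hθp := hθ0 p
          calc _ ≤ 1 * (1 + w p / m) ^ (1 + s) * (θ p * (D p * η p) ^ l) := by
                gcongr
                exact (hι R p).2
            _ = θ p * ((1 + w p / m) ^ (1 + s) * (D p * η p) ^ l) := by ring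
            _ ≤ θ p * (κ / (2 * C1) * (w p ^ q / m ^ q * (D p * η p) ^ (l + 2)) + C2) := by gcongr
            _ = κ / (2 * C1) * (m ^ q)⁻¹ * (w p ^ q * (θ p * (D p * η p) ^ (l + 2))) + θ p * C2 := by
                ring
            _ ≤ _ := by
                have := mul_le_of_le_one_left hC2 (hθ1 p)
                linarith
        · simp only [zero_off_box hc hθε hl hb, zero_off_box hc hθε (by omega : l + 2 ≠ 0) hb,
            Set.indicator_of_notMem hb, mul_zero, add_zero, le_refl]
    rw [integral_add ((hI hc).const_mul _) ((hbi R).const_mul _), integral_const_mul,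
      integral_const_mul] at hmono
    set X := ∫ p in halfSpace n, w p ^ q * (θ p * (D p * η p) ^ (l + 2)) with hX
    have hb := hbint R hR
    have hmq : (R ^ α)⁻¹ * m * (m ^ q)⁻¹ = 1 := by
      have := hm1 1 zero_le_one
      rwa [Real.div_rpow zero_le_one hm.le, Real.one_rpow, Real.one_rpow, one_div, mul_one] at this
    have h2 : κ * X ≤ C1 * (R ^ α)⁻¹ * m * (κ / (2 * C1) * (m ^ q)⁻¹ * X + C2 * (V * R ^ α * R ^ n)) := by
      refine h1.trans ?_
      gcongr
      exact hmono.trans (by gcongr)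
    have h3 : C1 * (R ^ α)⁻¹ * m * (κ / (2 * C1) * (m ^ q)⁻¹ * X + C2 * (V * R ^ α * R ^ n)) =
        κ / 2 * X * ((R ^ α)⁻¹ * m * (m ^ q)⁻¹) + C1 * C2 * V * (m * R ^ n) := by
      field_simp
    rw [h3, hmq] at h2
    have h4 : C1 * C2 * V * (m * R ^ n) ≤ C1 * C2 * V * 1 := by gcongr
    rw [le_div_iff₀ hκ]
    linarith
  -- exhaustion
  set Rj : ℕ → ℝ := fun j => j + 2 with hRj
  have hRj1 : ∀ j, 1 < Rj j := fun j => by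
    have : (0:ℝ) ≤ j := by positivity
    simp only [hRj]; linarith
  have hRjt : Tendsto Rj atTop atTop := tendsto_atTop_add_const_right _ _ tendsto_natCast_atTop_atTop
  set B : ℕ → Set (Pt n) := fun j => (shell n (Rj j ^ α) (Rj j))ᶜ with hB
  have hcov : AECover μS atTop B := by
    refine ⟨?_, fun j => (measurableSet_shell n _ _).compl⟩
    filter_upwards with p
    have t1 := ((tendsto_rpow_atTop hα).comp hRjt).eventually_ge_atTop p.1
    have t2 := hRjt.eventually_ge_atTop (2 * ‖p.2‖)
    filter_upwards [t1, t2] with j h1 h2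
    simp only [hB, shell, Set.mem_compl_iff, Set.mem_ofPred_eq, not_or, not_lt]
    exact ⟨h1, by linarith⟩
  have hBmem : ∀ j p, p ∈ B j → p.1 ≤ Rj j ^ α ∧ ‖p.2‖ ≤ Rj j / 2 := by
    intro j p hp
    simpa only [hB, shell, Set.mem_compl_iff, Set.mem_ofPred_eq, not_or, not_lt] using hp
  have hBeq : ∀ j {D η : Pt n → ℝ}, Cutoff n C (Rj j ^ α) (Rj j) D η → ∀ p ∈ B j,
      w p ^ q * (θ p * (D p * η p) ^ (l + 2)) = f p := by
    intro j D η hc p hp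
    obtain ⟨h1, h2⟩ := hBmem j p hp
    rw [hc.Deq1 p h1, hc.ηeq1 p h2]
    simp [hf]
  have hBle : ∀ j {D η : Pt n → ℝ}, Cutoff n C (Rj j ^ α) (Rj j) D η →
      ∫ p in B j, f p ∂μS ≤ ∫ p in halfSpace n, w p ^ q * (θ p * (D p * η p) ^ (l + 2)) := by
    intro j D η hc
    rw [← setIntegral_congr_fun (hcov.measurableSet j) (hBeq j hc)]
    apply setIntegral_le_integral (hI hc)
    filter_upwards [ae_restrict_mem hSm] with p hp
    exact mul_nonneg (Real.rpow_nonneg (hw0 p hp) _)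
      (mul_nonneg (hθ0 p) (pow_nonneg (hχ hc p).1 _))
  have hRj0 : ∀ j, 0 < Rj j := fun j => by linarith [hRj1 j]
  have hfint : Integrable f μS := by
    refine hcov.integrable_of_integral_bounded_of_nonneg_ae (2 * C1 * C2 * V / κ) ?_ hf0ae ?_
    · intro j
      obtain ⟨D, η, hc⟩ := hcut (Rj j ^ α) (Rj j) (by have := hRj0 j; positivity) (hRj0 j)
      exact (hI hc).integrableOn.congr_fun (hBeq j hc) (hcov.measurableSet j)
    · filter_upwards with j
      obtain ⟨D, η, hc⟩ := hcut (Rj j ^ α) (Rj j) (by have := hRj0 j; positivity) (hRj0 j)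
      exact (hBle j hc).trans (hstep1 _ (hRj1 j) D η hc)
  have hlim := hcov.integral_tendsto_of_countably_generated hfint
  set I := ∫ p, f p ∂μS with hIdef
  -- Step 2
  have hstep2 : ∀ δ : ℝ, 0 < δ → ∀ j, κ * ∫ p in B j, f p ∂μS ≤
      C1 * 2 ^ q * (V * δ + δ ^ (1 - q) * (I - ∫ p in B j, f p ∂μS)) := by
    intro δ hδ j
    have hR := hRj1 j
    have hR0 := hRj0 j
    obtain ⟨D, η, hc⟩ := hcut (Rj j ^ α) (Rj j) (by positivity) (hRj0 j)
    have hBlej := hBle j hc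
    have hshint : ∫ p, (shell n (Rj j ^ α) (Rj j)).indicator f p ∂μS = I - ∫ p in B j, f p ∂μS := by
      rw [integral_indicator (measurableSet_shell n _ _), hIdef,
        ← integral_add_compl (measurableSet_shell n (Rj j ^ α) (Rj j)) hfint]
      simp only [hB]; ring
    set R := Rj j
    have hT0 : 0 < R ^ α := by positivity
    obtain ⟨m, hm, hm1, hm2⟩ := scale_facts hn hα hq1 hq2 hR hδ
    have h1 := hcore R m hR hm D η hc
    have hfsh : Integrable ((shell n (R ^ α) R).indicator f) μS :=
      hfint.indicator (measurableSet_shell n _ _)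
    have hmono : ∫ p in halfSpace n, (shell n (R ^ α) R).indicator 1 p *
        (1 + w p / m) ^ (1 + s) * (θ p * (D p * η p) ^ l) ≤
        ∫ p in halfSpace n, (2 ^ q * (box n ε (R ^ α) R).indicator 1 p +
          2 ^ q * (m ^ q)⁻¹ * (shell n (R ^ α) R).indicator f p) := by
      apply integral_mono_of_nonneg
      · filter_upwards [ae_restrict_mem hSm] with p hp
        have := one_le_z hm (hw0 p hp)
        exact mul_nonneg (mul_nonneg (hι R p).1 (by positivity))
          (mul_nonneg (hθ0 p) (pow_nonneg (hχ hc p).1 _))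
      · exact ((hbi R).const_mul _).add (hfsh.const_mul _)
      · filter_upwards [ae_restrict_mem hSm] with p hp
        have hwp := hw0 p hp
        have hz := one_le_z hm hwp
        have hfp := hf0 p hp
        have hfi : 0 ≤ (shell n (R ^ α) R).indicator f p := by
          by_cases hsh : p ∈ shell n (R ^ α) R <;> simp [hsh, hfp]
        have hbp : 0 ≤ (box n ε (R ^ α) R).indicator (1 : Pt n → ℝ) p :=
          Set.indicator_nonneg (fun _ _ => zero_le_one) p
        by_cases hb : p ∈ box n ε (R ^ α) R
        · by_cases hsh : p ∈ shell n (R ^ α) R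
          · simp only [Set.indicator_of_mem hb, Set.indicator_of_mem hsh, Pi.one_apply, mul_one, one_mul]
            have hχ0 := (hχ hc p).1
            have hθp := hθ0 p
            calc _ ≤ (1 + w p / m) ^ q * (θ p * 1) := by
                  gcongr
                  exact pow_le_one₀ hχ0 (hχ hc p).2
              _ ≤ 2 ^ q * (1 + (w p / m) ^ q) * (θ p * 1) := by
                  gcongr
                  exact one_add_rpow_le (by linarith) (by positivity)
              _ = 2 ^ q * θ p + 2 ^ q * (m ^ q)⁻¹ * f p := by
                  rw [Real.div_rpow hwp hm.le, hf]; ring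
              _ ≤ _ := by
                  have : (2:ℝ) ^ q * θ p ≤ 2 ^ q := mul_le_of_le_one_right (by positivity) (hθ1 p)
                  linarith
          · simp only [Set.indicator_of_notMem hsh, zero_mul]
            positivity
        · simp only [zero_off_box hc hθε hl hb, mul_zero]
          positivity
    rw [integral_add ((hbi R).const_mul _) (hfsh.const_mul _), integral_const_mul,
      integral_const_mul, hshint] at hmono
    have hb := hbint R hR
    have hmq : (R ^ α)⁻¹ * m * (m ^ q)⁻¹ = δ ^ (1 - q) := by
      have := hm1 1 zero_le_one
      rwa [Real.div_rpow zero_le_one hm.le, Real.one_rpow, one_div, mul_one] at this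
    set J := I - ∫ p in B j, f p ∂μS
    have h2 : κ * ∫ p in B j, f p ∂μS ≤ C1 * (R ^ α)⁻¹ * m * (2 ^ q * (V * R ^ α * R ^ n) + 2 ^ q * (m ^ q)⁻¹ * J) := by
      refine (mul_le_mul_of_nonneg_left hBlej hκ.le).trans (h1.trans ?_)
      gcongr
      exact hmono.trans (by gcongr)
    have h3 : C1 * (R ^ α)⁻¹ * m * (2 ^ q * (V * R ^ α * R ^ n) + 2 ^ q * (m ^ q)⁻¹ * J) =
        C1 * 2 ^ q * (V * (m * R ^ n) + ((R ^ α)⁻¹ * m * (m ^ q)⁻¹) * J) := by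
      field_simp
    rw [h3, hmq] at h2
    refine h2.trans ?_
    gcongr
  have hlim2 : ∀ δ : ℝ, 0 < δ → κ * I ≤ C1 * 2 ^ q * V * δ := by
    intro δ hδ
    have l1 := hlim.const_mul κ
    have l2 := (((hlim.const_sub I).const_mul (δ ^ (1 - q))).const_add (V * δ)).const_mul (C1 * 2 ^ q)
    have := le_of_tendsto_of_tendsto' l1 l2 (hstep2 δ hδ)
    rw [sub_self, mul_zero, add_zero] at this
    linarith
  have hIle : I ≤ 0 := by
    by_contra hpos
    push Not at hpos
    have hW : 0 < C1 * 2 ^ q * V := by positivity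
    have := hlim2 (κ * I / (2 * (C1 * 2 ^ q * V))) (by positivity)
    have e : C1 * 2 ^ q * V * (κ * I / (2 * (C1 * 2 ^ q * V))) = κ * I / 2 := by field_simp
    rw [e] at this
    have : 0 < κ * I := by positivity
    linarith
  have hI0 : I = 0 := le_antisymm hIle (integral_nonneg_of_ae hf0ae)
  have hae : f =ᵐ[volume.restrict (halfSpace n)] (fun _ => 0) :=
    (integral_eq_zero_iff_of_nonneg_ae hf0ae hfint).1 hI0
  have := haar_Pt n
  exact Measure.eqOn_open_of_ae_eq hae (isOpen_halfSpace n) hfc continuousOn_const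

lemma integrable_weak {n : ℕ} {q : ℝ} (hq : 1 < q) {a : Fin n → Fin n → Pt n → ℝ}
    {u φ : Pt n → ℝ}
    (ha_meas : ∀ i j, Measurable (a i j)) (ha_lb : ∀ i j, LB (a i j))
    (hu : ContDiffOn ℝ 1 u (halfSpace n)) (hφ : ContDiff ℝ 1 φ) (hφK : HasCompactSupport φ)
    (hφS : tsupport φ ⊆ halfSpace n) :
    IntegrableOn (fun p => pdT u p * φ p + ∑ i, ∑ j, a i j p * pdX φ i p * pdX u j p
          - oddPow q (u p) * φ p) (halfSpace n) := by
  have hSm := measurableSet_halfSpace n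
  have hud : ContinuousOn (fderiv ℝ u) (halfSpace n) :=
    hu.continuousOn_fderiv_of_isOpen (isOpen_halfSpace n) (by norm_num)
  have huT : ContinuousOn (pdT u) (halfSpace n) := hud.clm_apply continuousOn_const
  have huX : ∀ j, ContinuousOn (pdX u j) (halfSpace n) := fun j => hud.clm_apply continuousOn_const
  have hφd : Continuous (fderiv ℝ φ) := hφ.continuous_fderiv (by norm_num)
  have hφX : ∀ j, Continuous (pdX φ j) := fun j => hφd.clm_apply continuous_const
  have hφc := hφ.continuous.continuousOn (s := halfSpace n)
  have hod : ContinuousOn (fun p => oddPow q (u p)) (halfSpace n) :=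
    (continuous_oddPow hq).comp_continuousOn hu.continuousOn
  have e : (fun p => pdT u p * φ p + ∑ i, ∑ j, a i j p * pdX φ i p * pdX u j p
          - oddPow q (u p) * φ p) = fun p => (pdT u p * φ p - oddPow q (u p) * φ p) +
          ∑ i, ∑ j, a i j p * pdX φ i p * pdX u j p := by
    funext p; ring
  have h1 : ContinuousOn (fun p => pdT u p * φ p - oddPow q (u p) * φ p) (halfSpace n) :=
    (huT.mul hφc).sub (hod.mul hφc)
  rw [e]
  refine integrable_of_LB ?_ ?_ hφK hφS ?_
  · refine LB.add (LB.of_continuousOn h1) ?_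
    exact LB.sum _ fun i => LB.sum _ fun j => LB.mul
      ((ha_lb i j).mul (LB.of_continuousOn (hφX i).continuousOn)) (LB.of_continuousOn (huX j))
  · refine AEStronglyMeasurable.add (h1.aestronglyMeasurable hSm) ?_
    refine Finset.aestronglyMeasurable_fun_sum _ fun i _ =>
      Finset.aestronglyMeasurable_fun_sum _ fun j _ => ?_
    exact ((ha_meas i j).aestronglyMeasurable.mul (hφX i).aestronglyMeasurable).mul
      ((huX j).aestronglyMeasurable hSm)
  · intro p hp
    have e1 : φ p = 0 := image_eq_zero_of_notMem_tsupport hp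
    have e2 : fderiv ℝ φ p = 0 := by
      by_contra hne
      exact hp (support_fderiv_subset ℝ hne)
    simp [e1, pdX, e2]

lemma weak_diff {n : ℕ} {q : ℝ} (hq : 1 < q) {a : Fin n → Fin n → Pt n → ℝ}
    {u v : Pt n → ℝ}
    (ha_meas : ∀ i j, Measurable (a i j)) (ha_lb : ∀ i j, LB (a i j))
    (hu : ContDiffOn ℝ 1 u (halfSpace n)) (hv : ContDiffOn ℝ 1 v (halfSpace n))
    (hsol : WeakSolPair a q u v) (φ : Pt n → ℝ) (h1 : ContDiff ℝ 1 φ) (h2 : HasCompactSupport φ)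
    (h3 : tsupport φ ⊆ halfSpace n) (h4 : ∀ p, 0 ≤ φ p) :
    0 ≤ ∫ p in halfSpace n, ((pdT (fun p => u p - v p) p - (oddPow q (u p) - oddPow q (v p))) * φ p
      + ∑ i, (∑ j, a i j p * pdX (fun p => u p - v p) j p) * pdX φ i p) := by
  have hSm := measurableSet_halfSpace n
  have hSo := isOpen_halfSpace n
  set w : Pt n → ℝ := fun p => u p - v p with hwdef
  have hw : ContDiffOn ℝ 1 w (halfSpace n) := hu.sub hv
  have hwd : ContinuousOn (fderiv ℝ w) (halfSpace n) :=
    hw.continuousOn_fderiv_of_isOpen hSo (by norm_num)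
  have hwT : ContinuousOn (pdT w) (halfSpace n) := hwd.clm_apply continuousOn_const
  have hwX : ∀ j, ContinuousOn (pdX w j) (halfSpace n) := fun j => hwd.clm_apply continuousOn_const
  have hh : ContinuousOn (fun p => oddPow q (u p) - oddPow q (v p)) (halfSpace n) :=
    ((continuous_oddPow hq).comp_continuousOn hu.continuousOn).sub
      ((continuous_oddPow hq).comp_continuousOn hv.continuousOn)
  refine weak_C1 (b := fun p => pdT w p - (oddPow q (u p) - oddPow q (v p)))
    (B := fun i p => ∑ j, a i j p * pdX w j p) (LB.of_continuousOn (hwT.sub hh))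
    (fun i => LB.sum _ fun j => (ha_lb i j).mul (LB.of_continuousOn (hwX j)))
    ((hwT.sub hh).aestronglyMeasurable hSm)
    (fun i => Finset.aestronglyMeasurable_fun_sum _ fun j _ =>
      ((ha_meas i j).aestronglyMeasurable).mul ((hwX j).aestronglyMeasurable hSm))
    ?_ φ h1 h2 h3 h4
  intro ψ hψ hψK hψS hψ0
  have hψ1 : ContDiff ℝ 1 ψ := hψ.of_le (by exact_mod_cast le_top)
  have hs := sub_nonneg.2 (hsol ψ hψ hψK hψS hψ0)
  rw [← integral_sub (integrable_weak hq ha_meas ha_lb hu hψ1 hψK hψS)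
    (integrable_weak hq ha_meas ha_lb hv hψ1 hψK hψS)] at hs
  refine hs.trans_eq (setIntegral_congr_fun hSm fun p hp => ?_)
  have hnp := hSo.mem_nhds hp
  have du : DifferentiableAt ℝ u p := (hu.contDiffAt hnp).differentiableAt (by norm_num)
  have dv : DifferentiableAt ℝ v p := (hv.contDiffAt hnp).differentiableAt (by norm_num)
  have dw : fderiv ℝ w p = fderiv ℝ u p - fderiv ℝ v p := fderiv_fun_sub du dv
  have eT : pdT w p = pdT u p - pdT v p := by simp [pdT, dw]
  have eX : ∀ j, pdX w j p = pdX u j p - pdX v j p := fun j => by simp [pdX, dw]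
  have eS : ∑ i, (∑ j, a i j p * pdX w j p) * pdX ψ i p =
      ∑ i, ∑ j, a i j p * pdX ψ i p * pdX u j p - ∑ i, ∑ j, a i j p * pdX ψ i p * pdX v j p := by
    rw [← Finset.sum_sub_distrib]
    refine Finset.sum_congr rfl fun i _ => ?_
    rw [← Finset.sum_sub_distrib, Finset.sum_mul]
    refine Finset.sum_congr rfl fun j _ => ?_
    rw [eX]; ring
  simp only [eS, eT]
  ring

/-- the Fujita comparison principle for the Cauchy problem with
arbitrary initial data (Theorem 4). -/
theorem fujita_comparison_principle
    (n : ℕ) (hn : 1 ≤ n) (α c q : ℝ) (hα : 0 < α) (hc : 0 < c)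
    (hq1 : 1 < q) (hq2 : q ≤ 1 + α / n)
    (a : Fin n → Fin n → Pt n → ℝ) (A : Pt n → ℝ)
    (ha_meas : ∀ i j, Measurable (a i j))
    (ha_locbdd : ∀ i j, ∀ K : Set (Pt n), IsCompact K → K ⊆ halfSpace n →
      ∃ M, ∀ p ∈ K, |a i j p| ≤ M)
    (ha_symm : ∀ i j, ∀ᵐ p ∂(volume.restrict (halfSpace n)), a i j p = a j i p)
    (hA_meas : Measurable A)
    (hA_nonneg : ∀ p, 0 ≤ A p)
    (hA_locbdd : ∀ K : Set (Pt n), IsCompact K → K ⊆ halfSpace n →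
      ∃ M, ∀ p ∈ K, A p ≤ M)
    (hform : ∀ᵐ p ∂(volume.restrict (halfSpace n)), ∀ ξ : Xn n,
      0 ≤ ∑ i, ∑ j, a i j p * ξ i * ξ j ∧
      ∑ i, ∑ j, a i j p * ξ i * ξ j ≤ A p * ‖ξ‖ ^ 2)
    (hcond8 : Cond8 A α c)
    (u v : Pt n → ℝ)
    -- `u` and `v` are continuous on `[0,∞) × ℝⁿ` (arbitrary initial data
    -- `u(0,·)`, `v(0,·)`: no condition relates them)
    (hu_cont : ContinuousOn u {p : Pt n | 0 ≤ p.1})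
    (hv_cont : ContinuousOn v {p : Pt n | 0 ≤ p.1})
    (hu : ContDiffOn ℝ 1 u (halfSpace n)) (hv : ContDiffOn ℝ 1 v (halfSpace n))
    (hu_int : LocallyIntegrableOn (fun p => |u p| ^ q) (halfSpace n) volume)
    (hv_int : LocallyIntegrableOn (fun p => |v p| ^ q) (halfSpace n) volume)
    (hsol : WeakSolPair a q u v)
    (huv : ∀ p ∈ halfSpace n, v p ≤ u p) :
    ∀ p ∈ halfSpace n, u p = v p := by
  intro p0 hp0
  have hε : 0 < p0.1 / 2 := half_pos hp0
  have hs : 0 < min (1 / 2) ((q - 1) / 2) := lt_min (by norm_num) (by linarith)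
  have hs2 := min_le_left (1 / 2 : ℝ) ((q - 1) / 2)
  have hs3 := min_le_right (1 / 2 : ℝ) ((q - 1) / 2)
  set s := min (1 / 2 : ℝ) ((q - 1) / 2)
  have hsq : 1 + s < q := by linarith
  obtain ⟨l, hl⟩ := exists_nat_gt (2 * (1 + s) / (q - 1 - s))
  have hd : 0 < q - 1 - s := by linarith
  have hl0 : l ≠ 0 := by
    rintro rfl
    have : 0 < 2 * (1 + s) / (q - 1 - s) := by positivity
    simp only [Nat.cast_zero] at hl
    linarith
  have hlq : ((l : ℝ) + 2) * (1 + s) ≤ l * q := by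
    rw [div_lt_iff₀ hd] at hl
    nlinarith
  obtain ⟨C, hC, hcut⟩ := exists_cutoff n
  obtain ⟨θ, hθc, hθ0, hθ1, hθX, hθT, hθε, hθp⟩ := exists_rise n hε
  have hw : ContDiffOn ℝ 1 (fun p => u p - v p) (halfSpace n) := hu.sub hv
  have hw0 : ∀ p ∈ halfSpace n, 0 ≤ (fun p => u p - v p) p := fun p hp => sub_nonneg.2 (huv p hp)
  have hh : ContinuousOn (fun p => oddPow q (u p) - oddPow q (v p)) (halfSpace n) :=
    ((continuous_oddPow hq1).comp_continuousOn hu.continuousOn).sub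
      ((continuous_oddPow hq1).comp_continuousOn hv.continuousOn)
  have hκ : (0 : ℝ) < 2 ^ (-q) := by positivity
  obtain ⟨C1, hC1, hcore⟩ := core hc hκ hs hs2 hq1 hC hε l hl0 ha_meas ha_locbdd ha_symm hform
    hcond8 hw hw0 hh (fun p hp => oddPow_sub_ge hq1 (huv p hp))
    (weak_diff hq1 ha_meas ha_locbdd hu hv hsol) hθc hθ0 hθX hθT hθε
  have hfin := concl hn hα hq1 hq2 hκ hs hsq hε hC1 hl0 hlq hw hw0 hθc hθ0 hθ1 hθε hcut hcore p0 hp0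
  have hθpos := hθp p0 (half_lt_self hp0)
  have h0 := (mul_eq_zero.1 hfin).resolve_right hθpos.ne'
  rw [Real.rpow_eq_zero (hw0 p0 hp0) (by linarith)] at h0
  exact sub_eq_zero.1 h0
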